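/- arXiv:1103.2106 — 2 statements merged into one kernel-verified Lean document; each statement's English description precedes it below -/
import Mathlib

section
/- There exists an absolute constant K and, for each pair A, B > 0, a constant C = C(A,B) such that the following holds. Let x, y, q satisfy exp((log x)^{1/10}) < y ≤ x and √y ≤ q ≤ y^A, let u := (log x)/(log y), and let 0 ≤ k ≤ (log q)/2 satisfy k ≥ K·(A+1)·log(u log u) and log x ≥ K·(B+1)·log q (with u ≥ 3). Then for every primitive character χ ∈ Ξ(k), every σ with α − Bk/log x ≤ σ ≤ α, and every real t with |t| ≤ q/2, one has |L'(σ+it,χ)/L(σ+it,χ)| ≤ C·log q, where L(s,χ) is the Dirichlet L-function of χ (which is nonzero at σ+it under these hypotheses). -/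
/-!
Write `ℓ = log q`. The saddle point satisfies `α ≥ 1 - 10 log(u log u) / log y` (`saddle_ge`):
otherwise `p ^ (1 - α) ≥ (u log u) ^ 5` for all primes `p > √y`, and as
`∑_{√y < p ≤ y} log p / p ≫ log y` by Chebyshev, the sum defining `α` would exceed
`u log y = log x`. With `K = 100`, the lower bounds on `k` and `log x` then make both `1 - α` and
`B k / log x` small multiples of `k / ℓ`, so that `σ ≥ 1 - k / (8 ℓ)`, well inside the zero-free
region `Re s > 1 - k / ℓ`, `|Im s| ≤ q`.

It remains to bound `L'/L` by `O(ℓ)` there, with a constant independent of `k`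
(`logDeriv_LFunction_le_of_zero_free`). Let `c = 1 + 1/ℓ + it` and `s = σ + it`. In a disc of
radius `9/10` about `c` one has `|L| ≤ q ^ 6 |L(c)|`, so Landau's lemma
(`exists_zeros_logDeriv_sub_le`) gives `L'/L = ∑_ρ 1 / (· - ρ) + O(ℓ)` near `c`, where `ρ` runs
over the nearby zeros. All of these satisfy `Re (c - ρ) ≥ (k + 1) / ℓ ≥ 2 |s - c|`, whence
`|1 / (s - ρ) - 1 / (c - ρ)| ≤ Re (1 / (c - ρ))`. The sum over `ρ` of the right-hand sides is at
most `|L'/L(c)| + O(ℓ)`, and `L'/L(c) = O(ℓ)` since `Re c = 1 + 1/ℓ`. Estimating the differences by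
the positive quantities `Re (1 / (c - ρ))` makes a count of the zeros close to `s` unnecessary
(`norm_logDeriv_le_of_zero_free`).
-/

open Complex

/-- The primes `p ≤ y`. -/
noncomputable def primesUpTo (y : ℝ) : Finset ℕ := (Finset.Iic ⌊y⌋₊).filter Nat.Prime

/-- `Xi q k` is the set of non-principal characters `χ (mod q)` whose `L`-function
has no zeros with `σ > 1 - k/log q`, `|t| ≤ q`, but has a zero with
`σ > 1 - (k+1)/log q`, `|t| ≤ q`. -/
def Xi (q : ℕ) [NeZero q] (k : ℝ) : Set (DirichletCharacter ℂ q) :=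
  {χ | χ ≠ 1 ∧
    (∀ σ t : ℝ, 1 - k / Real.log q < σ → |t| ≤ (q : ℝ) →
      DirichletCharacter.LFunction χ ((σ : ℂ) + (t : ℂ) * Complex.I) ≠ 0) ∧
    (∃ σ t : ℝ, 1 - (k + 1) / Real.log q < σ ∧ |t| ≤ (q : ℝ) ∧
      DirichletCharacter.LFunction χ ((σ : ℂ) + (t : ℂ) * Complex.I) = 0)}


/-! ### Logarithmic derivatives and zeros in a disc -/

/-- A zero-free function of controlled growth has a small logarithmic derivative: Borel-Carathéodory
bounds the branch `h` of `log (g / g c)` vanishing at `c`, and Cauchy's estimate on discs of radius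
`R / 12` bounds `h' = g' / g`. -/
lemma norm_logDeriv_le_of_ne_zero {g : ℂ → ℂ} (hg : Differentiable ℂ g) {c : ℂ} {R M : ℝ}
    (hR : 0 < R) (hM : 0 < M) (hne : ∀ z ∈ Metric.ball c (R / 3), g z ≠ 0)
    (hb : ∀ z ∈ Metric.ball c (R / 3), ‖g z‖ ≤ Real.exp M * ‖g c‖) {s : ℂ}
    (hs : s ∈ Metric.closedBall c (R / 6)) :
    ‖deriv g s / g s‖ ≤ 72 * M / R := by
  have hcb : c ∈ Metric.ball c (R / 3) := Metric.mem_ball_self (by positivity)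
  have hdg : Differentiable ℂ (deriv g) := by
    exact (hg.contDiff (n := 2)).differentiable_deriv_two
  have hd : DifferentiableOn ℂ (fun z => deriv g z / g z) (Metric.ball c (R / 3)) :=
    hdg.differentiableOn.div hg.differentiableOn hne
  -- `h` is the branch of `log (g / g c)` on the disc with `h c = 0`.
  obtain ⟨h, hh⟩ := hd.isExactOn_ball.with_val_at c 0
  obtain ⟨hc0, hh⟩ := hh
  have hconst : ∀ z ∈ Metric.ball c (R / 3), g z * exp (-h z) = g c := by
    intro z hz
    have := (convex_ball c (R / 3)).is_const_of_fderivWithin_eq_zero (𝕜 := ℂ)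
      (f := fun z => g z * exp (-h z)) (x := z) (y := c) ?_ ?_ hz hcb
    · simpa [hc0] using this
    · intro w hw
      exact ((hg w).mul ((hh w hw).differentiableAt.neg.cexp)).differentiableWithinAt
    · intro w hw
      have h1 : HasDerivAt (fun z => g z * exp (-h z)) 0 w := by
        have hw0 := hne w hw
        refine ((hg w).hasDerivAt.mul (hh w hw).neg.cexp).congr_deriv ?_
        simp only [Pi.neg_apply]
        field_simp
        ring
      rw [fderivWithin_of_isOpen Metric.isOpen_ball hw]
      have := h1.hasFDerivAt.fderiv
      rw [this]; ext; simp
  have hgc := hne c hcb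
  have hre : ∀ z ∈ Metric.ball c (R / 3), (h z).re ≤ M := by
    intro z hz
    have h1 := hconst z hz
    have h2 : g z = g c * exp (h z) := by
      rw [← h1, mul_assoc, ← Complex.exp_add]; simp
    have h3 := hb z hz
    rw [h2, norm_mul, Complex.norm_exp, mul_comm] at h3
    exact Real.exp_le_exp.1 (le_of_mul_le_mul_right h3 (norm_pos_iff.2 hgc))
  have hbc : ∀ z ∈ Metric.closedBall c (R / 4), ‖h z‖ ≤ 6 * M := by
    intro z hz
    have hz' : ‖z - c‖ ≤ R / 4 := by simpa [dist_eq_norm] using hz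
    have h1 : ∀ w ∈ Metric.ball (0 : ℂ) (R / 3), w + c ∈ Metric.ball c (R / 3) := by
      intro w hw; simpa using hw
    have := borelCaratheodory_zero (f := fun w => h (w + c)) (R := R / 3) (z := z - c) hM
      (fun w hw => ((hh _ (h1 w hw)).comp_add_const w c).differentiableAt.differentiableWithinAt)
      (fun w hw => hre _ (h1 w hw)) (by positivity)
      (by rw [mem_ball_zero_iff]; linarith) (by simpa using hc0)
    simp only [sub_add_cancel] at this
    refine this.trans ?_
    rw [div_le_iff₀ (by linarith)]
    nlinarith
  have hs' : ‖s - c‖ ≤ R / 6 := by simpa [dist_eq_norm] using hs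
  have hsb : s ∈ Metric.ball c (R / 3) := by
    rw [Metric.mem_ball, dist_eq_norm]; linarith
  have hsub : Metric.closedBall s (R / 12) ⊆ Metric.closedBall c (R / 4) := by
    apply Metric.closedBall_subset_closedBall'
    rw [dist_eq_norm]; linarith
  have hsub' : Metric.closedBall c (R / 4) ⊆ Metric.ball c (R / 3) :=
    Metric.closedBall_subset_ball (by linarith)
  have hcauchy := Complex.norm_deriv_le_of_forall_mem_sphere_norm_le (c := s) (f := h)
    (R := R / 12) (C := 6 * M) (by positivity) ?_
    (fun z hz => hbc z (hsub (Metric.sphere_subset_closedBall hz)))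
  · rw [(hh s hsb).deriv] at hcauchy
    refine hcauchy.trans (le_of_eq ?_)
    field_simp; norm_num
  · refine DifferentiableOn.diffContOnCl ?_
    intro w hw
    exact (hh w (hsub' (hsub (Metric.closure_ball_subset_closedBall hw)))).differentiableAt.differentiableWithinAt

/-- Dividing `f` by linear factors at points of the disc of radius `R / 3` improves its growth bound
by a factor `2` for each point: on the circle of radius `R` one has `|z - ρ| ≥ 2R/3`, while
`|c - ρ| ≤ R/3`, and the maximum principle extends the bound to the whole disc. -/
lemma bound_cofactor {f g : ℂ → ℂ} (hg : Differentiable ℂ g) {c : ℂ} {R M : ℝ}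
    (hR : 0 < R) (hfb : ∀ z ∈ Metric.closedBall c R, ‖f z‖ ≤ Real.exp M * ‖f c‖)
    (Z : Multiset ℂ) (hZ : ∀ ρ ∈ Z, ρ ∈ Metric.closedBall c (R / 3))
    (hfg : ∀ z, f z = (Z.map (fun ρ => z - ρ)).prod * g z) :
    ∀ z ∈ Metric.closedBall c R, 2 ^ Z.card * ‖g z‖ ≤ Real.exp M * ‖g c‖ := by
  have key : ∀ z ∈ Metric.sphere c R, 2 ^ Z.card * ‖g z‖ ≤ Real.exp M * ‖g c‖ := by
    intro z hz
    have hzc : ‖z - c‖ = R := by simpa [dist_eq_norm] using hz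
    have hlow : ∀ Z : Multiset ℂ, (∀ ρ ∈ Z, ρ ∈ Metric.closedBall c (R / 3)) →
        (2 * R / 3) ^ Z.card ≤ ‖(Z.map (fun ρ => z - ρ)).prod‖ := by
      intro Z
      induction Z using Multiset.induction_on with
      | empty => simp
      | cons a Z ih =>
        intro h
        have h1 := ih (fun ρ hρ => h ρ (Multiset.mem_cons_of_mem hρ))
        have h2 : ‖a - c‖ ≤ R / 3 := by
          simpa [dist_eq_norm] using h a (Multiset.mem_cons_self a Z)
        have h3 : 2 * R / 3 ≤ ‖z - a‖ := by
          have := norm_sub_norm_le (z - c) (a - c)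
          rw [sub_sub_sub_cancel_right] at this
          linarith
        rw [Multiset.card_cons, pow_succ', Multiset.map_cons, Multiset.prod_cons, norm_mul]
        gcongr
    have hup : ∀ Z : Multiset ℂ, (∀ ρ ∈ Z, ρ ∈ Metric.closedBall c (R / 3)) →
        ‖(Z.map (fun ρ => c - ρ)).prod‖ ≤ (R / 3) ^ Z.card := by
      intro Z
      induction Z using Multiset.induction_on with
      | empty => simp
      | cons a Z ih =>
        intro h
        have h1 := ih (fun ρ hρ => h ρ (Multiset.mem_cons_of_mem hρ))
        have h2 : ‖c - a‖ ≤ R / 3 := by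
          rw [norm_sub_rev]
          simpa [dist_eq_norm] using h a (Multiset.mem_cons_self a Z)
        rw [Multiset.card_cons, pow_succ', Multiset.map_cons, Multiset.prod_cons, norm_mul]
        gcongr
    have h1 := hfb z (Metric.sphere_subset_closedBall hz)
    rw [hfg z, hfg c, norm_mul, norm_mul] at h1
    have h2 : (2 * R / 3) ^ Z.card * ‖g z‖ ≤ Real.exp M * ((R / 3) ^ Z.card * ‖g c‖) := by
      refine le_trans ?_ (h1.trans ?_)
      · gcongr; exact hlow Z hZ
      · gcongr; exact hup Z hZ
    have h3 : (2 * R / 3) ^ Z.card = (R / 3) ^ Z.card * 2 ^ Z.card := by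
      rw [← mul_pow]; congr 1; ring
    rw [h3] at h2
    have h4 : 0 < (R / 3) ^ Z.card := by positivity
    refine le_of_mul_le_mul_left ?_ h4
    linarith
  intro z hz
  have := Complex.norm_le_of_forall_mem_frontier_norm_le (f := g) (U := Metric.ball c R)
    (C := Real.exp M * ‖g c‖ / 2 ^ Z.card) Metric.isBounded_ball hg.diffContOnCl ?_
    (z := z) (by rwa [closure_ball c hR.ne'])
  · rw [le_div_iff₀ (by positivity)] at this
    linarith
  · intro w hw
    rw [frontier_ball c hR.ne'] at hw
    rw [le_div_iff₀ (by positivity)]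
    linarith [key w hw]

/-- All zeros in the disc of radius `R / 3` can be split off, with multiplicity. Zeros are removed one
at a time, and the process stops because `bound_cofactor` at `c` gives `2 ^ n ≤ exp M` after `n`
steps. -/
lemma exists_zero_factorization {f : ℂ → ℂ} (hf : Differentiable ℂ f) {c : ℂ} {R M : ℝ}
    (hR : 0 < R) (hfc : f c ≠ 0)
    (hfb : ∀ z ∈ Metric.closedBall c R, ‖f z‖ ≤ Real.exp M * ‖f c‖) :
    ∃ (Z : Multiset ℂ) (g : ℂ → ℂ), Differentiable ℂ g ∧
      (∀ ρ ∈ Z, ρ ∈ Metric.closedBall c (R / 3)) ∧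
      (∀ z, f z = (Z.map (fun ρ => z - ρ)).prod * g z) ∧
      (∀ z ∈ Metric.closedBall c (R / 3), g z ≠ 0) := by
  classical
  by_contra! hcon
  have hall : ∀ n : ℕ, ∃ (Z : Multiset ℂ) (g : ℂ → ℂ), Z.card = n ∧ Differentiable ℂ g ∧
      (∀ ρ ∈ Z, ρ ∈ Metric.closedBall c (R / 3)) ∧
      (∀ z, f z = (Z.map (fun ρ => z - ρ)).prod * g z) := by
    intro n
    induction n with
    | zero => exact ⟨0, f, by simp, hf, by simp, by simp⟩
    | succ n ih =>
      obtain ⟨Z, g, hn, hg, hZ, hfg⟩ := ih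
      obtain ⟨a, ha, ha0⟩ := hcon Z g hg hZ hfg
      refine ⟨a ::ₘ Z, dslope g a, by simp [hn], ?_, ?_, ?_⟩
      · rw [← differentiableOn_univ, Complex.differentiableOn_dslope Filter.univ_mem]
        exact hg.differentiableOn
      · intro ρ hρ
        rcases Multiset.mem_cons.1 hρ with rfl | h
        · exact ha
        · exact hZ ρ h
      · intro z
        have := sub_smul_dslope g a z
        rw [ha0, sub_zero, smul_eq_mul] at this
        rw [hfg z, ← this, Multiset.map_cons, Multiset.prod_cons]
        ring
  obtain ⟨n, hn⟩ := pow_unbounded_of_one_lt (Real.exp M) (one_lt_two)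
  obtain ⟨Z, g, hcard, hg, hZ, hfg⟩ := hall n
  have h1 := bound_cofactor hg hR hfb Z hZ hfg c (Metric.mem_closedBall_self hR.le)
  have h2 : g c ≠ 0 := by
    intro h; apply hfc; rw [hfg c, h, mul_zero]
  rw [hcard] at h1
  exact absurd (le_of_mul_le_mul_right h1 (norm_pos_iff.2 h2)) (not_le.2 hn)

lemma logDeriv_prod_sub (Z : Multiset ℂ) (s : ℂ) (h : ∀ ρ ∈ Z, s ≠ ρ) :
    logDeriv (fun z => (Z.map (fun ρ => z - ρ)).prod) s = (Z.map (fun ρ => 1 / (s - ρ))).sum := by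
  induction Z using Multiset.induction_on with
  | empty => simp [logDeriv]
  | cons a Z ih =>
    have hd : Differentiable ℂ (fun z : ℂ => (Z.map (fun ρ => z - ρ)).prod) := by
      clear ih h
      induction Z using Multiset.induction_on with
      | empty => simp
      | cons b Z ih =>
        simp only [Multiset.map_cons, Multiset.prod_cons]
        fun_prop
    simp only [Multiset.map_cons, Multiset.prod_cons, Multiset.sum_cons]
    rw [logDeriv_mul (f := fun z => z - a) s (sub_ne_zero.2 (h a (Multiset.mem_cons_self a Z)))
      _ (by fun_prop) (hd s), ih (fun ρ hρ => h ρ (Multiset.mem_cons_of_mem hρ))]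
    · simp [logDeriv_apply]
    · intro h0
      rw [Multiset.prod_eq_zero_iff, Multiset.mem_map] at h0
      obtain ⟨b, hb, hb0⟩ := h0
      exact h b (Multiset.mem_cons_of_mem hb) (sub_eq_zero.1 hb0)

/-- Landau's lemma: near the centre of a disc in which `|f| ≤ exp M * |f c|`, the logarithmic
derivative of `f` is `∑ 1 / (s - ρ)` up to `O(M / R)`. The multiset `Z` consists of the zeros of
`f` in the disc of radius `R / 3`, with multiplicity. -/
lemma exists_zeros_logDeriv_sub_le {f : ℂ → ℂ} (hf : Differentiable ℂ f) {c : ℂ} {R M : ℝ}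
    (hR : 0 < R) (hM : 0 < M) (hfc : f c ≠ 0)
    (hfb : ∀ z ∈ Metric.closedBall c R, ‖f z‖ ≤ Real.exp M * ‖f c‖) :
    ∃ Z : Multiset ℂ, (∀ ρ ∈ Z, f ρ = 0 ∧ ρ ∈ Metric.closedBall c (R / 3)) ∧
      ∀ s ∈ Metric.closedBall c (R / 6), f s ≠ 0 →
        ‖logDeriv f s - (Z.map (fun ρ => 1 / (s - ρ))).sum‖ ≤ 72 * M / R := by
  obtain ⟨Z, g, hg, hZ, hfg, hne⟩ := exists_zero_factorization hf hR hfc hfb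
  have hZ0 : ∀ ρ ∈ Z, f ρ = 0 := by
    intro ρ hρ
    rw [hfg ρ, Multiset.prod_eq_zero, zero_mul]
    exact Multiset.mem_map.2 ⟨ρ, hρ, sub_self ρ⟩
  refine ⟨Z, fun ρ hρ => ⟨hZ0 ρ hρ, hZ ρ hρ⟩, fun s hs hfs => ?_⟩
  have hb := bound_cofactor hg hR hfb Z hZ hfg
  have hsne : ∀ ρ ∈ Z, s ≠ ρ := fun ρ hρ h => hfs (h ▸ hZ0 ρ hρ)
  have hfs' := hfs
  rw [hfg s] at hfs'
  have hd : Differentiable ℂ (fun z : ℂ => (Z.map (fun ρ => z - ρ)).prod) := by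
    clear * -
    induction Z using Multiset.induction_on with
    | empty => simp
    | cons b Z ih =>
      simp only [Multiset.map_cons, Multiset.prod_cons]
      fun_prop
  have hl : logDeriv f s = (Z.map (fun ρ => 1 / (s - ρ))).sum + logDeriv g s := by
    rw [show f = fun z => (Z.map (fun ρ => z - ρ)).prod * g z from funext hfg,
      logDeriv_mul (f := fun z => (Z.map (fun ρ => z - ρ)).prod) s (left_ne_zero_of_mul hfs')
        (right_ne_zero_of_mul hfs') (hd s) (hg s), logDeriv_prod_sub Z s hsne]
  rw [hl, add_sub_cancel_left, logDeriv_apply]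
  refine norm_logDeriv_le_of_ne_zero hg hR hM
    (fun z hz => hne z (Metric.ball_subset_closedBall hz)) (fun z hz => ?_) hs
  refine le_trans ?_ (hb z (Metric.closedBall_subset_closedBall (by linarith)
    (Metric.ball_subset_closedBall hz)))
  exact le_mul_of_one_le_left (norm_nonneg _) (one_le_pow₀ one_le_two)

/-- If the zeros near `c` lie at horizontal distance at least `η` to the left of `c`, then moving left
from `c` by `δ ≤ η / 2` changes the size of the logarithmic derivative by at most a constant factor
and `O(M / R)`, regardless of the number of zeros. -/
theorem norm_logDeriv_le_of_zero_free {f : ℂ → ℂ} (hf : Differentiable ℂ f) {c : ℂ}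
    {R M N η δ : ℝ} (hR : 0 < R) (hM : 0 < M) (hη : 0 < η) (hfc : f c ≠ 0)
    (hfb : ∀ z ∈ Metric.closedBall c R, ‖f z‖ ≤ Real.exp M * ‖f c‖)
    (hzero : ∀ ρ ∈ Metric.closedBall c (R / 3), f ρ = 0 → ρ.re ≤ c.re - η)
    (hN : ‖logDeriv f c‖ ≤ N) (hδ0 : 0 ≤ δ) (hδR : δ ≤ R / 6) (hδη : δ ≤ η / 2) :
    ‖logDeriv f (c - δ)‖ ≤ 2 * N + 216 * M / R := by
  obtain ⟨Z, hZ, hsum⟩ := exists_zeros_logDeriv_sub_le hf hR hM hfc hfb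
  have hsball : c - (δ : ℂ) ∈ Metric.closedBall c (R / 6) := by
    simpa [dist_eq_norm, abs_of_nonneg hδ0] using hδR
  have hfs : f (c - δ) ≠ 0 := by
    intro h
    have := hzero _ (Metric.closedBall_subset_closedBall (by linarith) hsball) h
    simp at this
    linarith
  have h1 := hsum c (Metric.mem_closedBall_self (by positivity)) hfc
  have h2 := hsum _ hsball hfs
  -- The difference of the two terms equals `δ / ((c - δ - ρ) (c - ρ))`, where `δ ≤ Re (c - ρ) / 2`
  -- and `|c - δ - ρ| ≥ |c - ρ| / 2`.
  have hpt : ∀ ρ ∈ Z, ‖1 / (c - δ - ρ) - 1 / (c - ρ)‖ ≤ (1 / (c - ρ)).re := by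
    intro ρ hρ
    have hre : η ≤ (c - ρ).re := by
      have := hzero ρ (hZ ρ hρ).2 (hZ ρ hρ).1
      rw [sub_re]; linarith
    have hn : (c - ρ).re ≤ ‖c - ρ‖ := re_le_norm _
    set w := c - ρ with hw
    have hwpos : 0 < ‖w‖ := by linarith
    have hw0 : w ≠ 0 := norm_pos_iff.1 hwpos
    have hδn : ‖(δ : ℂ)‖ = δ := by simp [abs_of_nonneg hδ0]
    have h3 : ‖w‖ / 2 ≤ ‖w - δ‖ := by
      have := norm_sub_norm_le w (δ : ℂ)
      rw [hδn] at this
      linarith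
    have hwd : w - δ ≠ 0 := norm_pos_iff.1 (by linarith)
    have h4 : 1 / (c - δ - ρ) - 1 / w = δ / ((w - δ) * w) := by
      rw [show c - δ - ρ = w - δ by rw [hw]; ring]
      field_simp
      ring
    rw [h4, norm_div, norm_mul, hδn, one_div, Complex.inv_re, Complex.normSq_eq_norm_sq,
      div_le_div_iff₀ (by positivity) (by positivity)]
    calc δ * ‖w‖ ^ 2 ≤ (w.re / 2) * ‖w‖ ^ 2 := by gcongr; linarith
      _ = w.re * (‖w‖ / 2 * ‖w‖) := by ring
      _ ≤ w.re * (‖w - δ‖ * ‖w‖) := by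
        have : 0 ≤ w.re := by linarith
        gcongr
  have hdiff : ∀ Z : Multiset ℂ,
      (∀ ρ ∈ Z, ‖1 / (c - δ - ρ) - 1 / (c - ρ)‖ ≤ (1 / (c - ρ)).re) →
      ‖(Z.map (fun ρ => 1 / (c - δ - ρ))).sum - (Z.map (fun ρ => 1 / (c - ρ))).sum‖ ≤
        ((Z.map (fun ρ => 1 / (c - ρ))).sum).re := by
    intro Z
    induction Z using Multiset.induction_on with
    | empty => simp
    | cons a Z ih =>
      intro h
      have h5 := ih (fun ρ hρ => h ρ (Multiset.mem_cons_of_mem hρ))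
      have h6 := h a (Multiset.mem_cons_self a Z)
      simp only [Multiset.map_cons, Multiset.sum_cons, add_re]
      rw [add_sub_add_comm]
      exact (norm_add_le _ _).trans (add_le_add h6 h5)
  have h7 := hdiff Z hpt
  set S := (Z.map (fun ρ => 1 / (c - ρ))).sum
  set T := (Z.map (fun ρ => 1 / (c - δ - ρ))).sum
  have h8 : S.re ≤ N + 72 * M / R := by
    have h9 : ‖S‖ ≤ ‖logDeriv f c‖ + ‖logDeriv f c - S‖ := by
      have := norm_sub_le (logDeriv f c) (logDeriv f c - S)
      simpa using this
    linarith [re_le_norm S]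
  have h10 : logDeriv f (c - δ) =
      (logDeriv f (c - δ) - T) + (T - S) - (logDeriv f c - S) + logDeriv f c := by ring
  rw [h10]
  have h11 : 216 * M / R = 3 * (72 * M / R) := by ring
  have h12 := norm_add_le ((logDeriv f (c - δ) - T) + (T - S) - (logDeriv f c - S)) (logDeriv f c)
  have h13 := norm_sub_le ((logDeriv f (c - δ) - T) + (T - S)) (logDeriv f c - S)
  have h14 := norm_add_le (logDeriv f (c - δ) - T) (T - S)
  linarith

/-! ### Bounds for Dirichlet `L`-functions -/

lemma norm_integral_sum_le {S : ℝ → ℂ} {M r : ℝ} {s : ℂ} (hrs : r < s.re)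
    (hS : ∀ t : ℝ, 1 < t → ‖S t‖ ≤ M * t ^ r) :
    ‖∫ t in Set.Ioi (1 : ℝ), S t * (t : ℂ) ^ (-(s + 1))‖ ≤ M / (s.re - r) := by
  have hint : MeasureTheory.IntegrableOn (fun t : ℝ => M * t ^ (r - s.re - 1)) (Set.Ioi 1) :=
    (integrableOn_Ioi_rpow_of_lt (by linarith) one_pos).const_mul _
  have h1 := MeasureTheory.norm_integral_le_of_norm_le
    (f := fun t : ℝ => S t * (t : ℂ) ^ (-(s + 1))) hint ?_
  · refine h1.trans (le_of_eq ?_)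
    rw [MeasureTheory.integral_const_mul, integral_Ioi_rpow_of_lt (by linarith) one_pos]
    have : s.re - r ≠ 0 := by linarith
    have : r - s.re ≠ 0 := by linarith
    simp only [Real.one_rpow, sub_add_cancel]
    rw [← neg_sub s.re r, neg_div_neg_eq]; ring
  · rw [MeasureTheory.ae_restrict_iff' measurableSet_Ioi]
    refine Filter.Eventually.of_forall fun t ht => ?_
    have ht0 : (0 : ℝ) < t := lt_trans one_pos ht
    rw [norm_mul, Complex.norm_cpow_eq_rpow_re_of_pos ht0]
    have : t ^ (r - s.re - 1) = t ^ r * t ^ (-(s + 1)).re := by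
      rw [← Real.rpow_add ht0]; congr 1; simp; ring
    rw [this, ← mul_assoc]
    exact mul_le_mul_of_nonneg_right (hS t ht) (Real.rpow_nonneg ht0.le _)

/-- Partial summation: a Dirichlet series whose coefficients are dominated by some `g` with
`∑_{k ≤ n} g k ≤ M n` is at most `M Re s / (Re s - 1)` for `Re s > 1`. -/
lemma norm_LSeries_le_of_norm_le {g : ℕ → ℝ} {f : ℕ → ℂ} {M : ℝ} (hg0 : ∀ n, 0 ≤ g n)
    (hg : ∀ n : ℕ, ∑ k ∈ Finset.Icc 1 n, g k ≤ M * n) (hfg : ∀ n, ‖f n‖ ≤ g n) {s : ℂ}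
    (hs : 1 < s.re) : ‖LSeries f s‖ ≤ M * s.re / (s.re - 1) := by
  have hO : (fun n : ℕ => ∑ k ∈ Finset.Icc 1 n, g k) =O[Filter.atTop]
      fun n : ℕ => (n : ℝ) ^ (1 : ℝ) := by
    refine Asymptotics.IsBigO.of_bound M (Filter.Eventually.of_forall fun n => ?_)
    rw [Real.norm_of_nonneg (Finset.sum_nonneg fun i _ => hg0 i), Real.rpow_one,
      Real.norm_of_nonneg (Nat.cast_nonneg n)]
    exact hg n
  have hσ : (1 : ℝ) < ((s.re : ℂ)).re := by simpa using hs
  have hsum := LSeriesSummable_of_sum_norm_bigO_and_nonneg hO hg0 zero_le_one hσ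
  have hterm : ∀ n, ‖LSeries.term f s n‖ ≤ ‖LSeries.term (fun n => (g n : ℂ)) (s.re : ℂ) n‖ := by
    intro n
    rcases eq_or_ne n 0 with rfl | hn
    · simp
    · rw [LSeries.norm_term_eq, LSeries.norm_term_eq, if_neg hn, if_neg hn]
      simp only [ofReal_re, norm_real, Real.norm_of_nonneg (hg0 n)]
      gcongr
      exact hfg n
  have h1 : ‖LSeries f s‖ ≤ ∑' n, ‖LSeries.term (fun n => (g n : ℂ)) (s.re : ℂ) n‖ :=
    tsum_of_norm_bounded hsum.norm.hasSum hterm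
  have h2 : ((∑' n, ‖LSeries.term (fun n => (g n : ℂ)) (s.re : ℂ) n‖ : ℝ) : ℂ) =
      LSeries (fun n => (g n : ℂ)) (s.re : ℂ) := by
    rw [LSeries, ofReal_tsum]
    refine tsum_congr fun n => ?_
    rcases eq_or_ne n 0 with rfl | hn
    · simp
    · rw [LSeries.norm_term_eq, if_neg hn, LSeries.term_of_ne_zero hn, ofReal_div,
        ofReal_cpow (Nat.cast_nonneg n)]
      simp [abs_of_nonneg (hg0 n)]
  have h3 := LSeries_eq_mul_integral_of_nonneg g zero_le_one hσ hO hg0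
  have h4 := norm_integral_sum_le (S := fun t => ∑ k ∈ Finset.Icc 1 ⌊t⌋₊, (g k : ℂ)) (M := M) hσ ?_
  · refine h1.trans ?_
    have h5 : (∑' n, ‖LSeries.term (fun n => (g n : ℂ)) (s.re : ℂ) n‖ : ℝ) =
        ‖LSeries (fun n => (g n : ℂ)) (s.re : ℂ)‖ := by
      rw [← h2, norm_real, Real.norm_of_nonneg (tsum_nonneg fun _ => norm_nonneg _)]
    rw [h5, h3, norm_mul, norm_real, Real.norm_of_nonneg (by linarith), mul_comm M, mul_div_assoc]
    rw [ofReal_re] at h4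
    exact mul_le_mul_of_nonneg_left h4 (by linarith)
  · intro t ht
    rw [← ofReal_sum, norm_real, Real.norm_of_nonneg (Finset.sum_nonneg fun i _ => hg0 i),
      Real.rpow_one]
    refine (hg _).trans ?_
    have hM : 0 ≤ M := by
      have := hg 1
      have h6 := hg0 1
      simp at this; linarith
    gcongr
    exact Nat.floor_le (by linarith)

section Dirichlet

variable {q : ℕ} [NeZero q] {χ : DirichletCharacter ℂ q}

/-- The coefficients of `1 / L(s, χ)` are `χ(n) μ(n)`, of modulus at most `1`. -/
lemma inv_norm_LFunction_le (χ : DirichletCharacter ℂ q) {s : ℂ} (hs : 1 < s.re) :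
    ‖χ.LFunction s‖⁻¹ ≤ s.re / (s.re - 1) := by
  rw [DirichletCharacter.LFunction_eq_LSeries χ hs, ← norm_inv,
    inv_eq_of_mul_eq_one_right (DirichletCharacter.LSeries.mul_mu_eq_one χ hs)]
  have := norm_LSeries_le_of_norm_le (g := fun _ => 1) (M := 1) (s := s)
    (f := (fun n : ℕ => χ n) * fun n : ℕ => ((ArithmeticFunction.moebius n : ℤ) : ℂ))
    (by simp) (by simp) ?_ hs
  · simpa using this
  · intro n
    simp only [Pi.mul_apply, norm_mul]
    refine mul_le_one₀ (χ.norm_le_one n) (norm_nonneg _) ?_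
    rw [Complex.norm_intCast]
    exact_mod_cast ArithmeticFunction.abs_moebius_le_one

/-- The coefficients of `-L'/L(s, χ)` are `χ(n) Λ(n)`, and `∑_{k ≤ n} Λ(k) ≤ (log 4 + 4) n ≤ 6 n` by
Chebyshev. -/
lemma norm_logDeriv_LFunction_le (χ : DirichletCharacter ℂ q) {s : ℂ} (hs : 1 < s.re) :
    ‖logDeriv χ.LFunction s‖ ≤ 6 * s.re / (s.re - 1) := by
  rw [logDeriv_apply, DirichletCharacter.LFunction_eq_LSeries χ hs,
    DirichletCharacter.deriv_LFunction_eq_deriv_LSeries χ hs, ← norm_neg, ← neg_div,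
    ← DirichletCharacter.LSeries_twist_vonMangoldt_eq χ hs]
  refine norm_LSeries_le_of_norm_le (g := fun n => ArithmeticFunction.vonMangoldt n)
    (fun n => ArithmeticFunction.vonMangoldt_nonneg) (fun n => ?_) (fun n => ?_) hs
  · have h1 := Chebyshev.psi_le_const_mul_self (x := n) (Nat.cast_nonneg n)
    rw [Chebyshev.psi, Nat.floor_natCast] at h1
    have h2 : Real.log 4 ≤ 2 := by
      rw [show (4 : ℝ) = 2 ^ 2 by norm_num, Real.log_pow]
      have := Real.log_two_lt_d9
      push_cast; linarith
    refine h1.trans ?_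
    gcongr; linarith
  · simp only [Pi.mul_apply, norm_mul, norm_real,
      Real.norm_of_nonneg ArithmeticFunction.vonMangoldt_nonneg]
    exact mul_le_of_le_one_left ArithmeticFunction.vonMangoldt_nonneg (χ.norm_le_one n)

/-- A nontrivial character sums to zero over a full period, so only an incomplete period remains. -/
lemma norm_sum_range_char_le (hχ : χ ≠ 1) (n : ℕ) : ‖∑ i ∈ Finset.range n, χ i‖ ≤ q := by
  have hq : 0 < q := Nat.pos_of_ne_zero (NeZero.ne q)
  induction n using Nat.strong_induction_on with
  | _ n ih =>
    rcases lt_or_ge n q with h | h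
    · refine (norm_sum_le _ _).trans ?_
      refine (Finset.sum_le_card_nsmul _ _ 1 (fun i _ => χ.norm_le_one _)).trans ?_
      simpa using h.le
    · obtain ⟨m, rfl⟩ := Nat.exists_eq_add_of_le h
      rw [Finset.sum_range_add]
      have h1 : ∑ i ∈ Finset.range q, χ (i : ZMod q) = 0 := by
        rw [← MulChar.sum_eq_zero_of_ne_one hχ]
        refine Finset.sum_bij (fun i _ => (i : ZMod q)) (by simp) ?_ ?_ (by simp)
        · intro a ha b hb hab
          rw [ZMod.natCast_eq_natCast_iff'] at hab
          rwa [Nat.mod_eq_of_lt (Finset.mem_range.1 ha),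
            Nat.mod_eq_of_lt (Finset.mem_range.1 hb)] at hab
        · intro b _
          exact ⟨b.val, Finset.mem_range.2 (ZMod.val_lt b), by simp⟩
      rw [h1, zero_add]
      simpa using ih m (by omega)

/-- Growth of `L(s, χ)` for nontrivial `χ` and `Re s > 0`, from
`L(s, χ) = s ∫_1^∞ S(t) t ^ (-s - 1) dt` with the bounded partial sums `S(t) = ∑_{n ≤ t} χ(n)`. The
formula holds for `Re s > 1`; the integral is the Mellin transform of `S` at `-s`, holomorphic
for `Re s > 0`, so the identity theorem extends it. -/
lemma norm_LFunction_le (hχ : χ ≠ 1) {s : ℂ} (hs : 0 < s.re) :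
    ‖χ.LFunction s‖ ≤ ‖s‖ * (2 * q / s.re) := by
  set S : ℝ → ℂ := fun t => ∑ k ∈ Finset.Icc 1 ⌊t⌋₊, χ (k : ZMod q) with hSdef
  have hSb : ∀ t, ‖S t‖ ≤ 2 * q := by
    intro t
    have h1 : S t = ∑ i ∈ Finset.range (⌊t⌋₊ + 1), χ (i : ZMod q) - χ 0 := by
      rw [Finset.sum_range_succ', hSdef]
      simp only [Nat.cast_zero, add_sub_cancel_right]
      rw [Finset.range_eq_Ico, Finset.sum_Ico_add' (fun i : ℕ => χ (i : ZMod q)) 0 ⌊t⌋₊ 1]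
      rfl
    rw [h1]
    have h2 := norm_sum_range_char_le hχ (⌊t⌋₊ + 1)
    have h3 := χ.norm_le_one 0
    have h4 : (1 : ℝ) ≤ q := by exact_mod_cast Nat.pos_of_ne_zero (NeZero.ne q)
    refine (norm_sub_le _ _).trans ?_
    linarith
  have hS0 : ∀ t, t < 1 → S t = 0 := by
    intro t ht
    simp [hSdef, Nat.floor_eq_zero.2 ht]
  have hmeas : Measurable S :=
    (measurable_from_nat (f := fun n : ℕ => ∑ k ∈ Finset.Icc 1 n, χ (k : ZMod q))).comp
      Nat.measurable_floor
  have hloc : MeasureTheory.LocallyIntegrableOn S (Set.Ioi 0) := by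
    have : MeasureTheory.LocallyIntegrable S := by
      refine (MeasureTheory.locallyIntegrable_const (2 * (q : ℝ))).mono
        hmeas.aestronglyMeasurable (Filter.Eventually.of_forall fun t => ?_)
      refine (hSb t).trans (le_abs_self _)
    exact this.locallyIntegrableOn _
  have hmellin : ∀ s : ℂ, 0 < s.re → DifferentiableAt ℂ (fun s => s * mellin S (-s)) s := by
    intro s hs
    have h1 : DifferentiableAt ℂ (mellin S) (-s) := by
      refine mellin_differentiableAt_of_isBigO_rpow (a := 0) (b := (-s).re - 1) hloc ?_ (by simpa)
        ?_ (by linarith)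
      · refine Asymptotics.IsBigO.of_bound (2 * q) (Filter.Eventually.of_forall fun t => ?_)
        simpa using hSb t
      · refine Asymptotics.IsBigO.of_bound 1 ?_
        filter_upwards [Ioo_mem_nhdsGT (zero_lt_one' ℝ)] with t ht
        rw [hS0 t ht.2]; simp
    exact differentiableAt_id.mul (h1.comp s differentiableAt_id.neg)
  have hint : ∀ s : ℂ, mellin S (-s) = ∫ t in Set.Ioi (1 : ℝ), S t * (t : ℂ) ^ (-(s + 1)) := by
    intro s
    rw [mellin]
    have h1 : (fun t : ℝ => (t : ℂ) ^ (-s - 1) • S t) =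
        fun t : ℝ => S t * (t : ℂ) ^ (-(s + 1)) := by
      ext t; rw [smul_eq_mul, mul_comm, neg_add']
    rw [h1]
    rw [← MeasureTheory.integral_Ici_eq_integral_Ioi (x := (1 : ℝ))]
    refine (MeasureTheory.setIntegral_eq_of_subset_of_forall_sdiff_eq_zero measurableSet_Ioi
      (Set.Ici_subset_Ioi.2 one_pos) fun t ht => ?_)
    rw [hS0 t (not_le.1 ht.2), zero_mul]
  have hlarge : ∀ s : ℂ, 1 < s.re → χ.LFunction s = s * mellin S (-s) := by
    intro s hs
    rw [DirichletCharacter.LFunction_eq_LSeries χ hs, hint]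
    refine LSeries_eq_mul_integral (fun n : ℕ => χ n) le_rfl (by linarith)
      (DirichletCharacter.LSeriesSummable_of_one_lt_re χ hs) ?_
    refine Asymptotics.IsBigO.of_bound (2 * q) (Filter.Eventually.of_forall fun n => ?_)
    have := hSb n
    simpa [hSdef] using this
  have hopen : IsOpen {s : ℂ | 0 < s.re} := isOpen_lt continuous_const continuous_re
  have heq : Set.EqOn χ.LFunction (fun s => s * mellin S (-s)) {s : ℂ | 0 < s.re} := by
    refine AnalyticOnNhd.eqOn_of_preconnected_of_eventuallyEq (z₀ := 2)
      ((DirichletCharacter.differentiable_LFunction hχ).differentiableOn.analyticOnNhd hopen)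
      (DifferentiableOn.analyticOnNhd
        (fun z hz => (hmellin z hz).differentiableWithinAt) hopen)
      (convex_halfSpace_re_gt 0).isPreconnected (by simp) ?_
    filter_upwards [(isOpen_lt continuous_const continuous_re).mem_nhds
      (show (1 : ℝ) < (2 : ℂ).re by simp)] with z hz
    exact hlarge z hz
  rw [heq hs]
  simp only [norm_mul, hint]
  refine mul_le_mul_of_nonneg_left ?_ (norm_nonneg _)
  have := norm_integral_sum_le (S := S) (M := 2 * q) (r := 0) hs (fun t _ => by simpa using hSb t)
  simpa using this

end Dirichlet

/-! ### A lower bound for the saddle point -/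

lemma theta_ge_div_four {t : ℝ} (ht : 24 ^ 4 ≤ t) : t / 4 ≤ Chebyshev.theta t := by
  have ht1 : (1 : ℝ) ≤ t := by linarith
  -- With `w = t ^ (1/4)` all error terms of the Chebyshev bound are polynomial in `w`.
  set w := t ^ (1 / 4 : ℝ) with hw
  have h1 := Chebyshev.theta_ge' ht1
  have hw4 : w ^ 4 = t := by
    rw [hw, ← Real.rpow_natCast, ← Real.rpow_mul (by linarith)]; norm_num
  have hw0 : 0 ≤ w := Real.rpow_nonneg (by linarith) _
  have hw24 : 24 ≤ w := by
    rw [← hw4] at ht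
    exact le_of_pow_le_pow_left₀ (by norm_num) hw0 ht
  have hsq : √t = w ^ 2 := by
    rw [← hw4, show w ^ 4 = (w ^ 2) ^ 2 by ring, Real.sqrt_sq (by positivity)]
  have hlog : Real.log t ≤ 4 * w := by
    have := Real.log_le_rpow_div (show 0 ≤ t by linarith) (show (0 : ℝ) < 1 / 4 by norm_num)
    rw [← hw] at this
    linarith
  have hlog2 : Real.log (t + 2) ≤ 8 * w := by
    have : Real.log (t + 2) ≤ Real.log (t ^ 2) :=
      Real.log_le_log (by linarith) (by nlinarith)
    rw [Real.log_pow] at this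
    push_cast at this
    linarith
  have hl2 := Real.log_two_gt_d9
  refine le_trans ?_ h1
  rw [hsq]
  have h2 : 2 * w ^ 2 * Real.log t ≤ 2 * w ^ 2 * (4 * w) := by gcongr
  have h3 : (t - 1) * 0.69 ≤ (t - 1) * Real.log 2 := by
    apply mul_le_mul_of_nonneg_left <;> linarith
  have h4 : 24 * w ^ 3 ≤ t := by
    rw [← hw4, show w ^ 4 = w * w ^ 3 by ring]; gcongr
  have h5 : 576 * w ≤ w ^ 3 := by nlinarith
  linarith

/-- A lower bound of Mertens type for `∑_{√y < p ≤ y} log p / p`, by partial summation from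
`t / 4 ≤ θ(t)`. -/
lemma sum_primes_log_div_ge {y : ℝ} (hy : 24 ^ 8 ≤ y) :
    Real.log y / 8 - 2 ≤
      ∑ k ∈ Finset.Ioc ⌊√y⌋₊ ⌊y⌋₊, (k : ℝ)⁻¹ * (if k.Prime then Real.log k else 0) := by
  have hy0 : 0 < y := by linarith
  have hs : 24 ^ 4 ≤ √y := by
    apply Real.le_sqrt_of_sq_le; linarith
  have hsy : √y ≤ y := by
    have := Real.mul_self_sqrt hy0.le
    nlinarith
  have hs0 : 0 < √y := by linarith
  set c : ℕ → ℝ := fun k => if k.Prime then Real.log k else 0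
  have hc : ∀ t : ℝ, ∑ k ∈ Finset.Icc 0 ⌊t⌋₊, c k = Chebyshev.theta t := by
    intro t
    rw [Chebyshev.theta_eq_sum_Icc, Finset.sum_filter]
  have hderiv : ∀ t : ℝ, deriv (fun t : ℝ => t⁻¹) t = -(t ^ 2)⁻¹ := fun t => by simp
  have hcont : ContinuousOn (fun t : ℝ => (t ^ 2)⁻¹) (Set.Icc (√y) y) := by
    apply ContinuousOn.inv₀ (by fun_prop)
    intro t ht
    have : 0 < t := lt_of_lt_of_le hs0 ht.1
    positivity
  rw [sum_mul_eq_sub_sub_integral_mul c (f := fun t : ℝ => t⁻¹) hs0.le hsy]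
  · simp only [hc, hderiv]
    have h1 : 0 ≤ y⁻¹ * Chebyshev.theta y := mul_nonneg (by positivity) (Chebyshev.theta_nonneg _)
    have h2 : (√y)⁻¹ * Chebyshev.theta √y ≤ 2 := by
      have := Chebyshev.theta_le_log4_mul_x hs0.le
      have h4 : Real.log 4 ≤ 2 := by
        rw [show (4 : ℝ) = 2 ^ 2 by norm_num, Real.log_pow]
        have := Real.log_two_lt_d9
        push_cast; linarith
      rw [inv_mul_le_iff₀ hs0]
      nlinarith
    have h3 : Real.log y / 8 ≤ ∫ t in Set.Ioc (√y) y, (t ^ 2)⁻¹ * Chebyshev.theta t := by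
      have hint : ∫ t in (√y)..y, (1 / 4) * t⁻¹ = Real.log y / 8 := by
        rw [intervalIntegral.integral_const_mul, integral_inv_of_pos hs0 hy0,
          Real.log_div hy0.ne' hs0.ne', Real.log_sqrt hy0.le]
        ring
      rw [← hint, intervalIntegral.integral_of_le hsy]
      refine MeasureTheory.setIntegral_mono_on ?_ ?_ measurableSet_Ioc ?_
      · refine (ContinuousOn.integrableOn_Icc ?_).mono_set Set.Ioc_subset_Icc_self
        apply ContinuousOn.mul continuousOn_const
        apply ContinuousOn.inv₀ (by fun_prop)
        intro t ht
        exact (lt_of_lt_of_le hs0 ht.1).ne'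
      · refine MeasureTheory.IntegrableOn.mono_set ?_ Set.Ioc_subset_Icc_self
        refine MeasureTheory.IntegrableOn.continuousOn_mul hcont ?_ isCompact_Icc
        exact (Chebyshev.theta_mono.monotoneOn _).integrableOn_isCompact isCompact_Icc
      · intro t ht
        have ht0 : 0 < t := lt_trans hs0 ht.1
        have := theta_ge_div_four (t := t) (by linarith [ht.1])
        calc 1 / 4 * t⁻¹ = (t ^ 2)⁻¹ * (t / 4) := by field_simp
          _ ≤ _ := by gcongr
    simp only [neg_mul, MeasureTheory.integral_neg]
    linarith
  · intro t ht
    exact differentiableAt_inv (lt_of_lt_of_le hs0 ht.1).ne'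
  · have : deriv (fun t : ℝ => t⁻¹) = fun t => -(t ^ 2)⁻¹ := funext hderiv
    rw [this]
    exact hcont.neg.integrableOn_Icc

/-- The saddle point is within `O(log (u log u) / log y)` of `1` from below, as otherwise the terms
with `√y < p ≤ y` alone would make the sum defining `α` too large. -/
theorem saddle_ge {y u α : ℝ} (hy : 24 ^ 8 ≤ y) (hly : 32 ≤ Real.log y) (hu : 3 ≤ u) (hα : 0 < α)
    (hsum : ∑ p ∈ primesUpTo y, Real.log p / ((p : ℝ) ^ α - 1) = u * Real.log y) :
    1 - 10 * Real.log (u * Real.log u) / Real.log y ≤ α := by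
  by_contra! hcon
  have hlu : 1 ≤ Real.log u := by
    rw [Real.le_log_iff_exp_le (by linarith)]
    linarith [Real.exp_one_lt_d9]
  set w := u * Real.log u with hw
  have hwu : u ≤ w := by nlinarith
  have hlw : 0 < Real.log w := Real.log_pos (by linarith)
  have hy0 : 0 < y := by linarith
  have hs1 : 1 < √y := by
    apply Real.lt_sqrt_of_sq_lt; linarith
  have hδ : 10 * Real.log w / Real.log y ≤ 1 - α := by linarith
  have hterm : ∀ p ∈ Finset.Ioc ⌊√y⌋₊ ⌊y⌋₊, w ^ 5 * ((p : ℝ)⁻¹ *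
      (if p.Prime then Real.log p else 0)) ≤
      if p.Prime then Real.log p / ((p : ℝ) ^ α - 1) else 0 := by
    intro p hp
    split_ifs with hpp
    · have hp1 : (1 : ℝ) < p := by exact_mod_cast hpp.one_lt
      have hps : √y ≤ p := by
        have := (Finset.mem_Ioc.1 hp).1
        exact ((Nat.floor_lt (by linarith)).1 this).le
      have hlp : Real.log y / 2 ≤ Real.log p := by
        rw [← Real.log_sqrt hy0.le]
        exact Real.log_le_log (by linarith) hps
      have h1 : w ^ 5 ≤ (p : ℝ) ^ (1 - α) := by
        rw [← Real.log_le_log_iff (by positivity) (by positivity), Real.log_pow,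
          Real.log_rpow (by linarith)]
        rw [div_le_iff₀ (by linarith)] at hδ
        have hα1 : 0 ≤ 1 - α := by
          by_contra! h
          nlinarith
        push_cast
        nlinarith
      have h2 : (p : ℝ) ^ (1 - α) = p / (p : ℝ) ^ α := by
        rw [Real.rpow_sub (by linarith), Real.rpow_one]
      have h3 : 0 < (p : ℝ) ^ α - 1 := sub_pos.2 (Real.one_lt_rpow hp1 hα)
      calc w ^ 5 * ((p : ℝ)⁻¹ * Real.log p) ≤ p / (p : ℝ) ^ α * ((p : ℝ)⁻¹ * Real.log p) := by
            rw [← h2]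
            have := Real.log_pos hp1
            gcongr
        _ = Real.log p / (p : ℝ) ^ α := by
            have : (p : ℝ) ≠ 0 := by linarith
            field_simp
        _ ≤ Real.log p / ((p : ℝ) ^ α - 1) := by
            have := Real.log_pos hp1
            gcongr
            linarith
    · simp
  have h1 := Finset.sum_le_sum hterm
  rw [← Finset.mul_sum, ← Finset.sum_filter] at h1
  have h2 : ∑ p ∈ (Finset.Ioc ⌊√y⌋₊ ⌊y⌋₊).filter Nat.Prime, Real.log p / ((p : ℝ) ^ α - 1) ≤
      ∑ p ∈ primesUpTo y, Real.log p / ((p : ℝ) ^ α - 1) := by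
    refine Finset.sum_le_sum_of_subset_of_nonneg ?_ ?_
    · intro p hp
      simp only [primesUpTo, Finset.mem_filter, Finset.mem_Ioc, Finset.mem_Iic] at hp ⊢
      exact ⟨hp.1.2, hp.2⟩
    · intro p hp _
      have hp1 : (1 : ℝ) < p := by exact_mod_cast (Finset.mem_filter.1 hp).2.one_lt
      exact div_nonneg (Real.log_pos hp1).le (sub_pos.2 (Real.one_lt_rpow hp1 hα)).le
  have h3 := sum_primes_log_div_ge hy
  have h4 : Real.log y / 16 ≤ Real.log y / 8 - 2 := by linarith
  -- Since `81 > 16`, this exceeds `u` even after the loss of the factor `16`.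
  have h5 : 81 * u ≤ w ^ 5 := by
    calc 81 * u = 3 ^ 4 * u := by norm_num
      _ ≤ w ^ 4 * w := by gcongr; linarith
      _ = w ^ 5 := by ring
  have h6 : 81 * u * (Real.log y / 16) ≤ u * Real.log y := by
    rw [← hsum]
    refine le_trans ?_ (h1.trans h2)
    exact mul_le_mul h5 (h4.trans h3) (by linarith) (by positivity)
  nlinarith

/-! ### The logarithmic derivative inside the zero-free region -/

/-- Inside a zero-free region of width `k / log q`, at a distance from its boundary that is
proportional to the width, `L'/L` is `O(log q)` with a constant not depending on `k`. -/
lemma logDeriv_LFunction_le_of_zero_free {q : ℕ} [NeZero q] {χ : DirichletCharacter ℂ q}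
    (hχ : χ ≠ 1) {k σ t : ℝ} (hk : 100 ≤ k) (hkq : k ≤ Real.log q / 2) (ht : |t| ≤ (q : ℝ) / 2)
    (hzf : ∀ σ t : ℝ, 1 - k / Real.log q < σ → |t| ≤ (q : ℝ) →
      DirichletCharacter.LFunction χ ((σ : ℂ) + (t : ℂ) * Complex.I) ≠ 0)
    (hσ : 1 - k / Real.log q / 8 ≤ σ) :
    ‖logDeriv χ.LFunction ((σ : ℂ) + (t : ℂ) * Complex.I)‖ ≤ 1500 * Real.log q := by
  set ℓ := Real.log q with hℓ
  have hℓ200 : 200 ≤ ℓ := by linarith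
  have hℓ0 : 0 < ℓ := by linarith
  have hq0 : (0 : ℝ) < q := by exact_mod_cast Nat.pos_of_ne_zero (NeZero.ne q)
  have hqℓ : ℓ + 1 ≤ q := by
    have := Real.log_le_sub_one_of_pos hq0
    linarith
  have hinv : ℓ⁻¹ ≤ 1 / 200 := by
    rw [inv_le_comm₀ hℓ0 (by norm_num)]; linarith
  have hinv0 : 0 < ℓ⁻¹ := by positivity
  -- The factor `Re s / (Re s - 1)` in the bounds for `1 / L` and `L'/L` is `O(ℓ)` for
  -- `Re s ≥ 1 + ℓ⁻¹`.
  have hratio : ∀ r : ℝ, 1 + ℓ⁻¹ ≤ r → r / (r - 1) ≤ ℓ + 1 := by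
    intro r hr
    have h1 : 1 ≤ ℓ * (r - 1) := by
      calc 1 = ℓ * ℓ⁻¹ := (mul_inv_cancel₀ hℓ0.ne').symm
        _ ≤ ℓ * (r - 1) := by gcongr; linarith
    rw [div_le_iff₀ (by linarith)]
    nlinarith
  have hfar : ∀ s : ℂ, 1 + ℓ⁻¹ ≤ s.re → ‖logDeriv χ.LFunction s‖ ≤ 12 * ℓ := by
    intro s hs
    refine (norm_logDeriv_LFunction_le χ (by linarith)).trans ?_
    rw [mul_div_assoc]
    linarith [hratio _ hs]
  rcases le_total (1 + ℓ⁻¹) σ with hcase | hcase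
  · refine (hfar _ (by simpa using hcase)).trans ?_
    linarith
  set c : ℂ := ((1 + ℓ⁻¹ : ℝ) : ℂ) + (t : ℂ) * Complex.I with hc
  have hcre : c.re = 1 + ℓ⁻¹ := by simp [hc]
  have hcim : c.im = t := by simp [hc]
  have hfc : χ.LFunction c ≠ 0 := by
    have := DirichletCharacter.LSeries_ne_zero_of_one_lt_re χ (s := c) (by rw [hcre]; linarith)
    rwa [← DirichletCharacter.LFunction_eq_LSeries χ (by rw [hcre]; linarith)] at this
  have hlow : 1 ≤ (ℓ + 1) * ‖χ.LFunction c‖ := by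
    have h1 := (inv_norm_LFunction_le χ (s := c) (by rw [hcre]; linarith)).trans
      (hratio _ hcre.ge)
    rwa [inv_le_iff_one_le_mul₀ (norm_pos_iff.2 hfc)] at h1
  have hre : ∀ z ∈ Metric.closedBall c (9 / 10), 1 / 10 ≤ z.re ∧ z.re ≤ 2 ∧ |z.im| ≤ q / 2 + 1 := by
    intro z hz
    have h0 : ‖z - c‖ ≤ 9 / 10 := by simpa [dist_eq_norm] using hz
    have h1 := (abs_re_le_norm (z - c)).trans h0
    have h2 := (abs_im_le_norm (z - c)).trans h0
    rw [sub_re, hcre, abs_le] at h1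
    rw [sub_im, hcim] at h2
    refine ⟨by linarith, by linarith, ?_⟩
    have := abs_sub_abs_le_abs_sub z.im t
    linarith
  have hfb : ∀ z ∈ Metric.closedBall c (9 / 10),
      ‖χ.LFunction z‖ ≤ Real.exp (6 * ℓ) * ‖χ.LFunction c‖ := by
    intro z hz
    obtain ⟨h1, h2, h3⟩ := hre z hz
    have h4 : ‖z‖ ≤ q := by
      refine (norm_le_abs_re_add_abs_im z).trans ?_
      rw [abs_of_nonneg (by linarith)]
      linarith
    have h5 : 2 * (q : ℝ) / z.re ≤ 20 * q := by
      rw [div_le_iff₀ (by linarith)]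
      nlinarith
    have h6 : ‖χ.LFunction z‖ ≤ q * (20 * q) := by
      refine (norm_LFunction_le hχ (by linarith)).trans ?_
      gcongr
    have hexp : Real.exp (6 * ℓ) = (q : ℝ) ^ 6 := by
      rw [mul_comm, Real.exp_mul, hℓ, Real.exp_log hq0]; norm_cast
    have hq20 : 20 ≤ (q : ℝ) := by linarith
    calc ‖χ.LFunction z‖ ≤ q * (20 * q) * 1 := by linarith
      _ ≤ q * (q * q) * ((ℓ + 1) * ‖χ.LFunction c‖) := by gcongr
      _ ≤ q * (q * q) * (q * ‖χ.LFunction c‖) := by gcongr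
      _ = (q : ℝ) ^ 4 * ‖χ.LFunction c‖ := by ring
      _ ≤ Real.exp (6 * ℓ) * ‖χ.LFunction c‖ := by
        rw [hexp]
        gcongr
        · linarith
        · norm_num
  have hzero : ∀ ρ ∈ Metric.closedBall c (9 / 10 / 3), χ.LFunction ρ = 0 →
      ρ.re ≤ c.re - (k + 1) / ℓ := by
    intro ρ hρ h0
    by_contra! h1
    obtain ⟨-, -, h4⟩ := hre ρ (Metric.closedBall_subset_closedBall (by norm_num) hρ)
    refine hzf ρ.re ρ.im ?_ (by linarith) (by rwa [re_add_im])
    rw [hcre, add_div, one_div] at h1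
    linarith
  have hkℓ : k / ℓ ≤ 1 / 2 := by
    rw [div_le_iff₀ hℓ0]; linarith
  have hkℓ' : 100 * ℓ⁻¹ ≤ k / ℓ := by
    rw [div_eq_mul_inv]; gcongr
  -- `δ = 1 + ℓ⁻¹ - σ ≤ 1/ℓ + k / (8 ℓ)` is below `R / 6 = 3/20` since `k / ℓ ≤ 1/2` and `ℓ ≥ 200`,
  -- and below `η / 2` since `k ≥ 100`.
  have hmain := norm_logDeriv_le_of_zero_free (DirichletCharacter.differentiable_LFunction hχ)
    (c := c) (R := 9 / 10) (M := 6 * ℓ) (N := 12 * ℓ) (η := (k + 1) / ℓ) (δ := 1 + ℓ⁻¹ - σ)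
    (by norm_num) (by positivity) (by positivity) hfc hfb hzero (hfar c hcre.ge)
    (by linarith) (by linarith) (by rw [add_div, one_div]; linarith)
  have hs : c - ((1 + ℓ⁻¹ - σ : ℝ) : ℂ) = (σ : ℂ) + (t : ℂ) * Complex.I := by
    rw [hc]; push_cast; ring
  rw [hs] at hmain
  refine hmain.trans (le_of_eq_of_le ?_ (show 1464 * ℓ ≤ 1500 * ℓ by linarith))
  ring

/-- Lemma 3: for primitive `χ ∈ Ξ(k)` with `k` large enough, the logarithmic
derivative of `L(s,χ)` is `O(log q)` in the region `α - Bk/log x ≤ σ ≤ α`,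
`|t| ≤ q/2`. -/
theorem logDeriv_LFunction_bound :
    ∃ K : ℝ, ∀ A B : ℝ, 0 < A → 0 < B → ∃ C : ℝ,
      ∀ (x y : ℝ) (q : ℕ) [NeZero q] (u α k : ℝ),
        Real.exp (Real.log x ^ ((1 : ℝ) / 10)) < y → y ≤ x →
        Real.sqrt y ≤ (q : ℝ) → (q : ℝ) ≤ y ^ A →
        u = Real.log x / Real.log y → 3 ≤ u →
        0 < α →
        (∑ p ∈ primesUpTo y, Real.log p / ((p : ℝ) ^ α - 1)) = Real.log x →
        0 ≤ k → k ≤ Real.log q / 2 →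
        K * (A + 1) * Real.log (u * Real.log u) ≤ k →
        K * (B + 1) * Real.log q ≤ Real.log x →
        ∀ χ ∈ Xi q k, χ.IsPrimitive → ∀ σ t : ℝ,
          α - B * k / Real.log x ≤ σ → σ ≤ α → |t| ≤ (q : ℝ) / 2 →
          ‖deriv (DirichletCharacter.LFunction χ) ((σ : ℂ) + (t : ℂ) * Complex.I) /
              DirichletCharacter.LFunction χ ((σ : ℂ) + (t : ℂ) * Complex.I)‖ ≤
            C * Real.log q := by
  refine ⟨100, fun A B hA hB => ⟨1500, ?_⟩⟩
  intro x y q _ u α k _ _ _ hqA hu hu3 hα hsum _ hkq hkK hxK χ hχ _ σ t hσ _ ht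
  obtain ⟨hχ1, hzf, -⟩ := hχ
  have hlu : 1 ≤ Real.log u := by
    rw [Real.le_log_iff_exp_le (by linarith)]
    linarith [Real.exp_one_lt_d9]
  have hlw : 1 ≤ Real.log (u * Real.log u) := by
    rw [Real.le_log_iff_exp_le (by positivity)]
    have := Real.exp_one_lt_d9
    nlinarith
  have hk : 100 ≤ k := by nlinarith
  have hq0 : (0 : ℝ) < q := by exact_mod_cast Nat.pos_of_ne_zero (NeZero.ne q)
  have hℓ0 : 0 < Real.log q := by linarith
  have hy0 : 0 < y := by
    refine lt_trans (Real.exp_pos _) ‹_›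
  have hqy : Real.log q ≤ A * Real.log y := by
    have := Real.log_le_log hq0 hqA
    rwa [Real.log_rpow hy0] at this
  have hly0 : 0 < Real.log y := by
    by_contra! h
    nlinarith
  -- `100 (A + 1) ≤ k ≤ log q / 2 ≤ A log y / 2` forces `y` to be large.
  have hly : 200 ≤ Real.log y := by
    by_contra! h
    nlinarith
  have hy : 24 ^ 8 ≤ y := by
    rw [← Real.exp_log hy0]
    calc (24 : ℝ) ^ 8 ≤ 2 ^ 200 := by norm_num
      _ ≤ Real.exp 1 ^ 200 := by gcongr; linarith [Real.exp_one_gt_d9]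
      _ = Real.exp 200 := by rw [← Real.exp_nat_mul]; norm_num
      _ ≤ Real.exp (Real.log y) := Real.exp_le_exp.2 hly
  have hsad := saddle_ge hy (by linarith) hu3 hα
    (hsum.trans (by rw [hu, div_mul_cancel₀ _ (ne_of_gt hly0)]))
  -- Both deviations, of `α` from `1` and of `σ` from `α`, are small fractions of the zero-free
  -- width: `1/10 + 1/100 < 1/8`.
  have h1 : 10 * Real.log (u * Real.log u) / Real.log y ≤ k / Real.log q / 10 := by
    rw [div_div, div_le_div_iff₀ hly0 (by positivity)]
    set w := Real.log (u * Real.log u)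
    calc 10 * w * (Real.log q * 10) = 100 * w * Real.log q := by ring
      _ ≤ 100 * w * (A * Real.log y) := by gcongr
      _ ≤ 100 * w * ((A + 1) * Real.log y) := by gcongr; linarith
      _ = 100 * (A + 1) * w * Real.log y := by ring
      _ ≤ k * Real.log y := by gcongr
  have h2 : B * k / Real.log x ≤ k / Real.log q / 100 := by
    have hx0 : 0 < Real.log x := lt_of_lt_of_le (by positivity) hxK
    rw [div_div, div_le_div_iff₀ hx0 (by positivity)]
    calc B * k * (Real.log q * 100) = k * (100 * B * Real.log q) := by ring
      _ ≤ k * (100 * (B + 1) * Real.log q) := by gcongr; linarith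
      _ ≤ k * Real.log x := by gcongr
  have h3 : 0 < k / Real.log q := by positivity
  have := logDeriv_LFunction_le_of_zero_free hχ1 hk hkq ht hzf (σ := σ) (by linarith)
  rwa [logDeriv_apply] at this
end

section
/- There exist constants y₀ and C such that for all y ≥ y₀, all moduli q ≥ 1 with log q ≤ (log y)², and all real β with 3/4 ≤ β ≤ 1: ∫_{−(log y)^{1/4}}^{(log y)^{1/4}} |L(β + it, χ₀; y)|² dt ≤ C · L(β, χ₀; y)² / log y. -/
/-!
Every Euler factor satisfies `‖(1 - p^{-β-it})⁻¹‖² · eulerDrop β t p = ‖(1 - p^{-β})⁻¹‖²`, so the integrand is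
`‖L(β, χ₀; y)‖²` divided by `H(t) = ∏_{p ≤ y, p ∤ q} eulerDrop β t p`, and the claim is
`∫ dt / H(t) ≪ 1 / log y`.

Write `L = log y`. As `eulerDrop` decreases in its first argument (`eulerDrop_anti`), `H(t)` only gets smaller
when `β ≤ 1` is replaced by `σ = 1 + 1/L`. At `σ` the product of the drops over all primes equals
`ζ(σ)² / |ζ(σ+it)|²`. The primes beyond `y` contribute a bounded factor (`tail_sum_le`), so the product over
`p ≤ y` is `≫ L² / |ζ(σ+it)|²` (`full_product_lower`), where `ζ(σ+it) ≪ |t|⁻¹ + 1 + |t|`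
(`norm_riemannZeta_le`).

It remains to divide out the primes dividing `q`, of which there are at most `K = 2L²`. Their drops multiply to
`exp (O(∑_{p ∣ q} (1 - cos (t log p)) / p))`, where primes above `K` contribute `O(1)` to the sum and those
below `K` at most `log log K + O(1)` up to a constant factor (`prod_drop_le`, `sum_inv_small_le`). For
`|t| ≤ L^{-1/8}` the cosines are so close to `1` that the product is `O(1)`, whence `H(t) ≫ 1 + (tL)²`. For
`L^{-1/8} ≤ |t| ≤ L^{1/4}` the product is a power of `log L`, which is `≪ L^{1/4}`, whence `H(t) ≫ L^{5/4}`
(`drop_dichotomy`). So `1 / H(t) ≪ 1 / (1 + (tL)²) + L^{-5/4}`, whose integral over `|t| ≤ L^{1/4}` is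
`O(1 / L)`.

Nothing about primes is used beyond the Euler product and `|ζ(s) - s/(s-1)| ≤ |s| / Re s`.
-/

open Complex

/-- The truncated Euler product `L(s,χ;y) = ∏_{p ≤ y} (1 - χ(p) p^{-s})⁻¹`. -/
noncomputable def LSmooth {q : ℕ} (χ : DirichletCharacter ℂ q) (y : ℝ) (s : ℂ) : ℂ :=
  ∏ p ∈ primesUpTo y, (1 - χ (p : ZMod q) * (p : ℂ) ^ (-s))⁻¹

/-! ### The zeta function to the right of `1` -/

theorem frac_bound (s : ℂ) (t : ℝ) (ht : 1 < t) :
    ‖((t : ℂ) - (⌊t⌋₊ : ℂ)) * (t : ℂ) ^ (-(s + 1))‖ ≤ t ^ (-(s.re + 1)) := by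
  have ht0 : 0 < t := by linarith
  rw [norm_mul, Complex.norm_cpow_eq_rpow_re_of_pos ht0]
  have h1 : ‖(t : ℂ) - (⌊t⌋₊ : ℂ)‖ ≤ 1 := by
    have : (t : ℂ) - (⌊t⌋₊ : ℂ) = ((t - ⌊t⌋₊ : ℝ) : ℂ) := by push_cast; rfl
    rw [this, Complex.norm_real, Real.norm_eq_abs, abs_le]
    constructor <;> linarith [Nat.floor_le ht0.le, Nat.lt_floor_add_one t]
  simpa using mul_le_mul_of_nonneg_right h1 (Real.rpow_nonneg ht0.le _)

/-- The bound comes from `ζ(s) = s ∫₁^∞ ⌊t⌋ t^{-s-1} dt`, valid for `Re s > 1`, after replacing `⌊t⌋`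
by `t`. -/
theorem norm_riemannZeta_sub_le {s : ℂ} (hs : 1 < s.re) :
    ‖riemannZeta s - s / (s - 1)‖ ≤ ‖s‖ / s.re := by
  have h0 : (0 : ℝ) < s.re := by linarith
  have hsum (n : ℕ) : ∑ k ∈ Finset.Icc 1 n, (1 : ℕ → ℂ) k = n := by simp
  have hz : riemannZeta s = s * ∫ t in Set.Ioi (1 : ℝ), (⌊t⌋₊ : ℂ) * (t : ℂ) ^ (-(s + 1)) := by
    rw [← LSeries_one_eq_riemannZeta hs, LSeries_eq_mul_integral' 1 zero_le_one hs]
    · simp only [hsum]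
    · simp only [Pi.one_apply, norm_one, Finset.sum_const, Nat.card_Icc, Nat.add_sub_cancel,
        nsmul_eq_mul, mul_one, Real.rpow_one]
      exact Asymptotics.isBigO_refl _ _
  have hI1 : MeasureTheory.IntegrableOn (fun t : ℝ => (t : ℂ) ^ (-s)) (Set.Ioi 1) :=
    integrableOn_Ioi_cpow_of_lt (by simpa using hs) one_pos
  have hI2 : MeasureTheory.IntegrableOn (fun t : ℝ => t ^ (-(s.re + 1))) (Set.Ioi 1) :=
    integrableOn_Ioi_rpow_of_lt (by linarith) one_pos
  have hI3 : MeasureTheory.IntegrableOn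
      (fun t : ℝ => ((t : ℂ) - (⌊t⌋₊ : ℂ)) * (t : ℂ) ^ (-(s + 1))) (Set.Ioi 1) := by
    refine MeasureTheory.Integrable.mono' hI2 ?_ ?_
    · refine Measurable.aestronglyMeasurable ?_
      have : Measurable fun t : ℝ => (⌊t⌋₊ : ℂ) :=
        (measurable_from_top (f := fun n : ℕ => (n : ℂ))).comp Nat.measurable_floor
      fun_prop
    · refine (MeasureTheory.ae_restrict_iff' measurableSet_Ioi).2 (.of_forall fun t ht => ?_)
      exact frac_bound s t ht
  have hval : ∫ t in Set.Ioi (1 : ℝ), (t : ℂ) ^ (-s) = 1 / (s - 1) := by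
    rw [integral_Ioi_cpow_of_lt (by simpa using hs) one_pos]
    have : s - 1 ≠ 0 := fun h => by
      have := congrArg Complex.re h; simp at this; linarith
    have : -s + 1 ≠ 0 := fun h => by
      have := congrArg Complex.re h; simp at this; linarith
    simp only [Complex.ofReal_one, Complex.one_cpow]
    grind
  have hsub : riemannZeta s - s / (s - 1) =
      -(s * ∫ t in Set.Ioi (1 : ℝ), ((t : ℂ) - (⌊t⌋₊ : ℂ)) * (t : ℂ) ^ (-(s + 1))) := by
    have : ∫ t in Set.Ioi (1 : ℝ), (⌊t⌋₊ : ℂ) * (t : ℂ) ^ (-(s + 1)) =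
        ∫ t in Set.Ioi (1 : ℝ), ((t : ℂ) ^ (-s) -
          ((t : ℂ) - (⌊t⌋₊ : ℂ)) * (t : ℂ) ^ (-(s + 1))) := by
      refine MeasureTheory.setIntegral_congr_fun measurableSet_Ioi fun t ht => ?_
      have ht0 : (t : ℂ) ≠ 0 := by
        have : (1 : ℝ) < t := ht
        exact_mod_cast (by linarith : t ≠ 0)
      have : (t : ℂ) ^ (-s) = t * (t : ℂ) ^ (-(s + 1)) := by
        rw [show -s = 1 + -(s + 1) by ring, Complex.cpow_add _ _ ht0, Complex.cpow_one]
      simp only [this]; ring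
    rw [hz, this, MeasureTheory.integral_sub hI1 hI3, hval]; ring
  rw [hsub, norm_neg, norm_mul, div_eq_mul_inv]
  refine mul_le_mul_of_nonneg_left ?_ (norm_nonneg _)
  calc _ ≤ ∫ t in Set.Ioi (1 : ℝ), t ^ (-(s.re + 1)) := by
        refine MeasureTheory.norm_integral_le_of_norm_le hI2 ?_
        refine (MeasureTheory.ae_restrict_iff' measurableSet_Ioi).2 (.of_forall fun t ht => ?_)
        exact frac_bound s t ht
    _ = (s.re)⁻¹ := by
        rw [integral_Ioi_rpow_of_lt (by linarith) one_pos]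
        simp only [Real.one_rpow]
        field_simp
        rw [show -(s.re + 1) + 1 = -s.re by ring]
        field_simp

/-- A form of `ζ(σ + it) ≪ |t|⁻¹ + 1 + |t|`, multiplied by `|t|` so that `t = 0` needs no exception. -/
theorem norm_riemannZeta_le {σ t : ℝ} (hσ : 1 < σ) (hσ2 : σ ≤ 2) :
    ‖riemannZeta (σ + t * I)‖ * |t| ≤ 2 + 3 * |t| + t ^ 2 := by
  set s : ℂ := σ + t * I with hsdef
  have hre : s.re = σ := by simp [s]
  have him : s.im = t := by simp [s]
  have h := norm_riemannZeta_sub_le (s := s) (by rw [hre]; exact hσ)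
  have hs : ‖s‖ ≤ 2 + |t| := by
    have := Complex.norm_le_abs_re_add_abs_im s
    rw [hre, him, abs_of_pos (by linarith)] at this
    linarith
  have h1 : ‖s‖ / s.re ≤ 2 + |t| := (div_le_self (norm_nonneg _) (by rw [hre]; exact hσ.le)).trans hs
  have h2 : |t| ≤ ‖s - 1‖ := by
    have := Complex.abs_im_le_norm (s - 1)
    simpa [him] using this
  have h3 : ‖s / (s - 1)‖ * |t| ≤ 2 + |t| := by
    rw [norm_div]
    have hpos : 0 < ‖s - 1‖ := by
      rw [norm_pos_iff]
      intro h
      have := congrArg Complex.re h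
      simp [hre] at this; linarith
    calc ‖s‖ / ‖s - 1‖ * |t| ≤ ‖s‖ / ‖s - 1‖ * ‖s - 1‖ := by gcongr
      _ = ‖s‖ := by field_simp
      _ ≤ _ := hs
  have h4 : ‖riemannZeta s‖ ≤ (2 + |t|) + ‖s / (s - 1)‖ := by
    have := norm_le_norm_add_norm_sub' (riemannZeta s) (s / (s - 1))
    linarith
  nlinarith [abs_nonneg t, sq_abs t]

theorem norm_riemannZeta_real {σ : ℝ} (hσ : 1 < σ) :
    1 / (σ - 1) ≤ ‖riemannZeta (σ : ℂ)‖ ∧ ‖riemannZeta (σ : ℂ)‖ ≤ 2 + 1 / (σ - 1) := by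
  have h := norm_riemannZeta_sub_le (s := (σ : ℂ)) (by simpa using hσ)
  have hp : 0 < σ - 1 := by linarith
  have e1 : ‖(σ : ℂ)‖ / (σ : ℂ).re = 1 := by
    rw [Complex.norm_real, Real.norm_eq_abs, abs_of_pos (by linarith), Complex.ofReal_re,
      div_self (by linarith)]
  have e2 : ‖(σ : ℂ) / (σ - 1)‖ = 1 + 1 / (σ - 1) := by
    have : (σ : ℂ) / (σ - 1) = ((σ / (σ - 1) : ℝ) : ℂ) := by push_cast; rfl
    rw [this, Complex.norm_real, Real.norm_eq_abs, abs_of_pos (by positivity)]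
    field_simp; ring
  rw [e1] at h
  have a := norm_le_norm_add_norm_sub' (riemannZeta (σ : ℂ)) ((σ : ℂ) / (σ - 1))
  have b := norm_le_norm_add_norm_sub (riemannZeta (σ : ℂ)) ((σ : ℂ) / (σ - 1))
  rw [e2] at a b
  constructor <;> linarith

/-! ### Euler factors off the real axis -/

/-- The factor by which the square modulus of the Euler factor at `p` drops when the argument moves
from `σ` to `σ + it`, that is `|1 - p^{-σ-it}|² / (1 - p^{-σ})²`, written so that `eulerDrop ≥ 1` and the
monotonicity in `σ` are visible; see `eulerDrop_mul`. -/
noncomputable def eulerDrop (σ t : ℝ) (p : ℕ) : ℝ :=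
  1 + 2 * (p : ℝ) ^ (-σ) * (1 - Real.cos (t * Real.log p)) / (1 - (p : ℝ) ^ (-σ)) ^ 2

theorem prime_rpow_pos {p : ℕ} (hp : p.Prime) (σ : ℝ) : 0 < (p : ℝ) ^ (-σ) :=
  Real.rpow_pos_of_pos (by exact_mod_cast hp.pos) _

theorem prime_rpow_lt_one {p : ℕ} (hp : p.Prime) {σ : ℝ} (hσ : 0 < σ) : (p : ℝ) ^ (-σ) < 1 :=
  Real.rpow_lt_one_of_one_lt_of_neg (by exact_mod_cast hp.one_lt) (by linarith)

theorem prime_rpow_anti {p : ℕ} (hp : p.Prime) {β σ : ℝ} (h : β ≤ σ) :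
    (p : ℝ) ^ (-σ) ≤ (p : ℝ) ^ (-β) :=
  Real.rpow_le_rpow_of_exponent_le (by exact_mod_cast hp.one_lt.le) (by linarith)

theorem prime_rpow_le_inv {p : ℕ} (hp : p.Prime) {σ : ℝ} (hσ : 1 ≤ σ) :
    (p : ℝ) ^ (-σ) ≤ 1 / p := by
  have := prime_rpow_anti hp hσ
  rwa [Real.rpow_neg_one, ← one_div] at this

theorem prime_inv_le_half {p : ℕ} (hp : p.Prime) : 1 / (p : ℝ) ≤ 1 / 2 :=
  one_div_le_one_div_of_le (by norm_num) (by exact_mod_cast hp.two_le)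

theorem eulerDrop_mul {p : ℕ} (hp : p.Prime) {σ : ℝ} (hσ : 0 < σ) (t : ℝ) :
    ‖(1 - (p : ℂ) ^ (-((σ : ℂ) + t * I)))⁻¹‖ ^ 2 * eulerDrop σ t p =
      ((1 - (p : ℝ) ^ (-σ))⁻¹) ^ 2 := by
  have hx1 := prime_rpow_lt_one hp hσ
  have hx0 := prime_rpow_pos hp σ
  have hp0 : (0 : ℝ) < p := by exact_mod_cast hp.pos
  have key : ‖1 - (p : ℂ) ^ (-((σ : ℂ) + t * I))‖ ^ 2 =
      (1 - (p : ℝ) ^ (-σ)) ^ 2 + 2 * (p : ℝ) ^ (-σ) * (1 - Real.cos (t * Real.log p)) := by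
    have e : (p : ℂ) ^ (-((σ : ℂ) + t * I)) =
        (((p : ℝ) ^ (-σ) : ℝ) : ℂ) * Complex.exp (((-(t * Real.log p) : ℝ) : ℂ) * I) := by
      rw [Complex.ofReal_cpow hp0.le, Complex.ofReal_natCast,
        Complex.cpow_def_of_ne_zero (by exact_mod_cast hp.ne_zero),
        Complex.cpow_def_of_ne_zero (by exact_mod_cast hp.ne_zero), ← Complex.exp_add]
      congr 1
      push_cast [Complex.natCast_log]
      ring
    rw [e, ← Complex.normSq_eq_norm_sq, Complex.normSq_apply]
    generalize (p : ℝ) ^ (-σ) = x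
    simp only [Complex.sub_re, Complex.sub_im, Complex.one_re, Complex.one_im, Complex.mul_re,
      Complex.mul_im, Complex.ofReal_re, Complex.ofReal_im, Complex.exp_ofReal_mul_I_re,
      Complex.exp_ofReal_mul_I_im, Real.cos_neg, Real.sin_neg]
    have := Real.sin_sq_add_cos_sq (t * Real.log p)
    linear_combination x ^ 2 * this
  have hc := Real.cos_le_one (t * Real.log p)
  rw [norm_inv, inv_pow, key, eulerDrop]
  generalize (p : ℝ) ^ (-σ) = x at *
  have h1 : 0 < (1 - x) ^ 2 := by have : 0 < 1 - x := by linarith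
                                  positivity
  have h2 : 0 ≤ 2 * x * (1 - Real.cos (t * Real.log p)) :=
    mul_nonneg (by positivity) (by linarith)
  have h3 : (1 - x) ^ 2 + 2 * x * (1 - Real.cos (t * Real.log p)) ≠ 0 := by linarith
  have h4 : (1 - x) ^ 2 ≠ 0 := h1.ne'
  rw [one_add_div h4, ← mul_div_assoc, inv_mul_cancel₀ h3, inv_pow, one_div]

theorem one_le_eulerDrop {p : ℕ} (hp : p.Prime) (σ t : ℝ) : 1 ≤ eulerDrop σ t p := by
  have hc := Real.cos_le_one (t * Real.log p)
  have hx0 := prime_rpow_pos hp σ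
  have : 0 ≤ 2 * (p : ℝ) ^ (-σ) * (1 - Real.cos (t * Real.log p)) / (1 - (p : ℝ) ^ (-σ)) ^ 2 :=
    div_nonneg (mul_nonneg (by positivity) (by linarith)) (sq_nonneg _)
  unfold eulerDrop; linarith

/-- Since `x / (1 - x)²` increases with `x` on `(0, 1)`, moving left makes the drop larger. This is what
reduces every `β ≤ 1` to a point just to the right of `1`. -/
theorem eulerDrop_anti {p : ℕ} (hp : p.Prime) {β σ : ℝ} (hβ : 0 < β) (h : β ≤ σ) (t : ℝ) :
    eulerDrop σ t p ≤ eulerDrop β t p := by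
  have hc := Real.cos_le_one (t * Real.log p)
  have hx0 := prime_rpow_pos hp σ
  have hx1 := prime_rpow_lt_one hp hβ
  have hx := prime_rpow_anti hp h
  unfold eulerDrop
  have : 0 < 1 - (p : ℝ) ^ (-β) := by linarith
  have : 0 ≤ 1 - Real.cos (t * Real.log p) := by linarith
  gcongr

theorem eulerDrop_le_exp {p : ℕ} (hp : p.Prime) {σ : ℝ} (hσ : 1 ≤ σ) (t : ℝ) :
    eulerDrop σ t p ≤ Real.exp (8 * ((p : ℝ) ^ (-σ) * (1 - Real.cos (t * Real.log p)))) := by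
  have hc := Real.cos_le_one (t * Real.log p)
  have hx0 := prime_rpow_pos hp σ
  have hx1 := (prime_rpow_le_inv hp hσ).trans (prime_inv_le_half hp)
  refine le_trans ?_ (Real.add_one_le_exp _)
  unfold eulerDrop
  generalize (p : ℝ) ^ (-σ) = x at *
  have hy : 0 ≤ x * (1 - Real.cos (t * Real.log p)) := mul_nonneg hx0.le (by linarith)
  have h4 : 1 / 4 ≤ (1 - x) ^ 2 := by nlinarith
  have : 2 * x * (1 - Real.cos (t * Real.log p)) / (1 - x) ^ 2 ≤
      8 * (x * (1 - Real.cos (t * Real.log p))) := by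
    rw [div_le_iff₀ (by linarith)]
    nlinarith
  linarith

theorem tendsto_prod_norm {σ : ℝ} (hσ : 1 < σ) (t : ℝ) :
    Filter.Tendsto (fun n : ℕ => ∏ p ∈ Nat.primesBelow n,
      ‖(1 - (p : ℂ) ^ (-((σ : ℂ) + t * I)))⁻¹‖) Filter.atTop
      (nhds ‖riemannZeta (σ + t * I)‖) := by
  have := (riemannZeta_eulerProduct (s := (σ : ℂ) + t * I) (by simpa using hσ)).norm
  simpa only [norm_prod] using this

theorem tendsto_prod_real {σ : ℝ} (hσ : 1 < σ) :
    Filter.Tendsto (fun n : ℕ => ∏ p ∈ Nat.primesBelow n, (1 - (p : ℝ) ^ (-σ))⁻¹) Filter.atTop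
      (nhds ‖riemannZeta (σ : ℂ)‖) := by
  have := tendsto_prod_norm hσ 0
  simp only [Complex.ofReal_zero, zero_mul, add_zero] at this
  refine this.congr fun n => Finset.prod_congr rfl fun p hp => ?_
  have hp := (Nat.mem_primesBelow.1 hp).2
  have hx := prime_rpow_lt_one hp (σ := σ) (by linarith)
  have e : (1 - (p : ℂ) ^ (-(σ : ℂ))) = ((1 - (p : ℝ) ^ (-σ) : ℝ) : ℂ) := by
    push_cast [Complex.ofReal_cpow (Nat.cast_nonneg p)]; rfl
  rw [norm_inv, e, Complex.norm_real, Real.norm_eq_abs, abs_of_pos (by linarith)]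

theorem eventually_subset_primesBelow {S : Finset ℕ} (hS : ∀ p ∈ S, p.Prime) :
    ∀ᶠ n in Filter.atTop, S ⊆ Nat.primesBelow n := by
  filter_upwards [Filter.eventually_gt_atTop (S.sup id)] with n hn p hp
  exact Nat.mem_primesBelow.2 ⟨(Finset.le_sup (f := id) hp).trans_lt hn, hS p hp⟩

theorem one_le_inv_factor {p : ℕ} (hp : p.Prime) {σ : ℝ} (hσ : 0 < σ) :
    1 ≤ (1 - (p : ℝ) ^ (-σ))⁻¹ := by
  have := prime_rpow_pos hp σ
  have := prime_rpow_lt_one hp hσ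
  exact (one_le_inv₀ (by linarith)).2 (by linarith)

/-- From `exp x ≤ (1 - x)⁻¹` and the Euler product, all of whose factors are at least `1`. -/
theorem exp_sum_le_zeta {S : Finset ℕ} (hS : ∀ p ∈ S, p.Prime) {σ : ℝ} (hσ : 1 < σ) :
    Real.exp (∑ p ∈ S, (p : ℝ) ^ (-σ)) ≤ ‖riemannZeta (σ : ℂ)‖ := by
  refine ge_of_tendsto (tendsto_prod_real hσ) ?_
  filter_upwards [eventually_subset_primesBelow hS] with n hn
  have hpr : ∀ p ∈ Nat.primesBelow n, p.Prime := fun p hp => (Nat.mem_primesBelow.1 hp).2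
  rw [Real.exp_sum]
  calc _ ≤ ∏ p ∈ S, (1 - (p : ℝ) ^ (-σ))⁻¹ := by
        refine Finset.prod_le_prod (fun _ _ => (Real.exp_pos _).le) fun p hp => ?_
        have h1 := prime_rpow_lt_one (hS p hp) (σ := σ) (by linarith)
        rw [le_inv_comm₀ (Real.exp_pos _) (by linarith), ← Real.exp_neg]
        linarith [Real.add_one_le_exp (-(p : ℝ) ^ (-σ))]
    _ ≤ _ := Finset.prod_le_prod_of_subset_of_one_le hn
        (fun p hp => zero_le_one.trans (one_le_inv_factor (hS p hp) (by linarith)))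
        (fun p hp _ => one_le_inv_factor (hpr p hp) (by linarith))

theorem one_add_sum_le_prod (S : Finset ℕ) {f : ℕ → ℝ} (hf : ∀ p ∈ S, 0 ≤ f p) :
    1 + ∑ p ∈ S, f p ≤ ∏ p ∈ S, (1 + f p) := by
  induction S using Finset.induction_on with
  | empty => simp
  | insert a S ha ih =>
    rw [Finset.sum_insert ha, Finset.prod_insert ha]
    have h1 := ih fun p hp => hf p (Finset.mem_insert_of_mem hp)
    have h2 := hf a (Finset.mem_insert_self a S)
    have h3 : 0 ≤ ∑ p ∈ S, f p :=
      Finset.sum_nonneg fun p hp => hf p (Finset.mem_insert_of_mem hp)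
    nlinarith

/-- Tail of the prime zeta function beyond `e^L` at `1 + 1/L`. For a prime `p ≥ e^L` the Euler factor
at `1 + 1/(2L)` exceeds the one at `1 + 1/L` by a factor at least `1 + p^{-1-1/L}/2`, whereas the whole
quotient `ζ(1 + 1/(2L)) / ζ(1 + 1/L)` is at most `4`. -/
theorem tail_sum_le {S : Finset ℕ} (hS : ∀ p ∈ S, p.Prime) {L : ℝ} (hL : 1 ≤ L)
    (hSL : ∀ p ∈ S, L ≤ Real.log p) :
    ∑ p ∈ S, (p : ℝ) ^ (-(1 + 1 / L)) ≤ 6 := by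
  have hL0 : 0 < L := by linarith
  have h1L : 0 < 1 / L := by positivity
  have h2L : 0 < 1 / (2 * L) := by positivity
  have h12 : 1 / (2 * L) ≤ 1 / L := one_div_le_one_div_of_le hL0 (by linarith)
  have key : ‖riemannZeta ((1 + 1 / L : ℝ) : ℂ)‖ * (1 + ∑ p ∈ S, (p : ℝ) ^ (-(1 + 1 / L)) / 2) ≤
      ‖riemannZeta ((1 + 1 / (2 * L) : ℝ) : ℂ)‖ := by
    refine le_of_tendsto_of_tendsto ((tendsto_prod_real (by linarith)).mul_const _)
      (tendsto_prod_real (by linarith)) ?_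
    filter_upwards [eventually_subset_primesBelow hS] with n hn
    have hpr : ∀ p ∈ Nat.primesBelow n, p.Prime := fun p hp => (Nat.mem_primesBelow.1 hp).2
    have h1 : 1 + ∑ p ∈ S, (p : ℝ) ^ (-(1 + 1 / L)) / 2 ≤
        ∏ p ∈ S, (1 + (p : ℝ) ^ (-(1 + 1 / L)) / 2) :=
      one_add_sum_le_prod S fun p hp => by
        have := prime_rpow_pos (hS p hp) (1 + 1 / L)
        positivity
    have h2 : ∏ p ∈ S, (1 + (p : ℝ) ^ (-(1 + 1 / L)) / 2) =
        ∏ p ∈ Nat.primesBelow n, if p ∈ S then (1 + (p : ℝ) ^ (-(1 + 1 / L)) / 2) else 1 := by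
      rw [Finset.prod_ite_mem, Finset.inter_eq_right.2 hn]
    have h0 : 0 ≤ ∏ p ∈ Nat.primesBelow n, (1 - (p : ℝ) ^ (-(1 + 1 / L)))⁻¹ :=
      Finset.prod_nonneg fun p hp =>
        zero_le_one.trans (one_le_inv_factor (hpr p hp) (by linarith))
    refine (mul_le_mul_of_nonneg_left (h1.trans h2.le) h0).trans ?_
    rw [← Finset.prod_mul_distrib]
    refine Finset.prod_le_prod (fun p hp => ?_) fun p hp => ?_
    · have := one_le_inv_factor (hpr p hp) (σ := 1 + 1 / L) (by linarith)
      have := prime_rpow_pos (hpr p hp) (1 + 1 / L)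
      split_ifs <;> positivity
    · have hx0 := prime_rpow_pos (hpr p hp) (1 + 1 / L)
      have hx1 := prime_rpow_lt_one (hpr p hp) (σ := 1 + 1 / (2 * L)) (by linarith)
      have hx := prime_rpow_anti (hpr p hp) (β := 1 + 1 / (2 * L)) (σ := 1 + 1 / L) (by linarith)
      split_ifs with hpS
      · have hp0 : (0 : ℝ) < p := by exact_mod_cast (hpr p hp).pos
        -- `p^{1/(2L)} ≥ e^{1/2} ≥ 3/2`
        have hbig : 3 / 2 * (p : ℝ) ^ (-(1 + 1 / L)) ≤ (p : ℝ) ^ (-(1 + 1 / (2 * L))) := by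
          have e : (p : ℝ) ^ (-(1 + 1 / (2 * L))) =
              (p : ℝ) ^ (1 / (2 * L)) * (p : ℝ) ^ (-(1 + 1 / L)) := by
            rw [← Real.rpow_add hp0]; congr 1; field_simp; ring
          rw [e]
          refine mul_le_mul_of_nonneg_right ?_ hx0.le
          rw [Real.rpow_def_of_pos hp0]
          have : 1 / 2 ≤ Real.log p * (1 / (2 * L)) := by
            have := hSL p hpS
            rw [mul_one_div, le_div_iff₀ (by positivity)]; linarith
          linarith [Real.add_one_le_exp (Real.log p * (1 / (2 * L)))]
        generalize (p : ℝ) ^ (-(1 + 1 / L)) = x at *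
        generalize (p : ℝ) ^ (-(1 + 1 / (2 * L))) = x' at *
        rw [inv_mul_eq_div, div_le_iff₀ (by linarith), inv_mul_eq_div, le_div_iff₀ (by linarith)]
        nlinarith
      · rw [mul_one]
        exact inv_anti₀ (by linarith) (by linarith)
  have hlo := (norm_riemannZeta_real (σ := 1 + 1 / L) (by linarith)).1
  have hhi := (norm_riemannZeta_real (σ := 1 + 1 / (2 * L)) (by linarith)).2
  have e1 : 1 / (1 + 1 / L - 1) = L := by field_simp; ring
  have e2 : 1 / (1 + 1 / (2 * L) - 1) = 2 * L := by field_simp; ring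
  rw [e1] at hlo; rw [e2] at hhi
  rw [← Finset.sum_div] at key
  have hnn : 0 ≤ ∑ p ∈ S, (p : ℝ) ^ (-(1 + 1 / L)) :=
    Finset.sum_nonneg fun p hp => (prime_rpow_pos (hS p hp) _).le
  by_contra hcon
  push Not at hcon
  nlinarith

/-! ### Products over `p ≤ y` and over the divisors of `q` -/

theorem prime_of_mem {y : ℝ} {p : ℕ} (hp : p ∈ primesUpTo y) : p.Prime :=
  (Finset.mem_filter.1 hp).2

/-- With `σ = 1 + 1/log y`, the product of the drops over all primes is `ζ(σ)² / |ζ(σ + it)|²`, and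
`ζ(σ) ≥ log y`; by `tail_sum_le` the primes beyond `y` account for a factor at most `exp 96`. -/
theorem full_product_lower {y : ℝ} (hy1 : 0 < y) (hL : 1 ≤ Real.log y) (t : ℝ) :
    Real.log y ^ 2 ≤ Real.exp 96 * (∏ p ∈ primesUpTo y, eulerDrop (1 + 1 / Real.log y) t p) *
      ‖riemannZeta (((1 + 1 / Real.log y : ℝ) : ℂ) + t * I)‖ ^ 2 := by
  set L := Real.log y with hLdef
  have hL0 : 0 < L := by linarith
  have h1L : 0 < 1 / L := by positivity
  have hσ : 1 < 1 + 1 / L := by linarith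
  have hlo := (norm_riemannZeta_real hσ).1
  have e1 : 1 / (1 + 1 / L - 1) = L := by field_simp; ring
  rw [e1] at hlo
  refine (pow_le_pow_left₀ hL0.le hlo 2).trans ?_
  refine le_of_tendsto_of_tendsto ((tendsto_prod_real hσ).pow 2)
    (((tendsto_prod_norm hσ t).pow 2).const_mul _) ?_
  filter_upwards [eventually_subset_primesBelow (fun p (hp : p ∈ primesUpTo y) => prime_of_mem hp)]
    with n hn
  have hpr : ∀ p ∈ Nat.primesBelow n, p.Prime := fun p hp => (Nat.mem_primesBelow.1 hp).2
  have hdrop : ∏ p ∈ Nat.primesBelow n \ primesUpTo y, eulerDrop (1 + 1 / L) t p ≤ Real.exp 96 := by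
    have hpr' : ∀ p ∈ Nat.primesBelow n \ primesUpTo y, p.Prime := fun p hp =>
      hpr p (Finset.mem_sdiff.1 hp).1
    have htail := tail_sum_le hpr' hL fun p hp => by
      have hp' := (Finset.mem_sdiff.1 hp).2
      have : y < p := by
        by_contra h
        push Not at h
        exact hp' (Finset.mem_filter.2 ⟨Finset.mem_Iic.2 (Nat.le_floor h), hpr' p hp⟩)
      exact Real.log_le_log hy1 this.le
    calc _ ≤ ∏ p ∈ Nat.primesBelow n \ primesUpTo y,
            Real.exp (16 * (p : ℝ) ^ (-(1 + 1 / L))) := by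
          refine Finset.prod_le_prod (fun p hp => zero_le_one.trans (one_le_eulerDrop (hpr' p hp) _ _))
            fun p hp => (eulerDrop_le_exp (hpr' p hp) hσ.le t).trans (Real.exp_le_exp.2 ?_)
          have := prime_rpow_pos (hpr' p hp) (1 + 1 / L)
          nlinarith [Real.neg_one_le_cos (t * Real.log p)]
      _ ≤ _ := by
          rw [← Real.exp_sum, ← Finset.mul_sum]
          exact Real.exp_le_exp.2 (by linarith)
  have hid : (∏ p ∈ Nat.primesBelow n, (1 - (p : ℝ) ^ (-(1 + 1 / L)))⁻¹) ^ 2 =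
      (∏ p ∈ Nat.primesBelow n, ‖(1 - (p : ℂ) ^ (-(((1 + 1 / L : ℝ) : ℂ) + t * I)))⁻¹‖) ^ 2 *
      ∏ p ∈ Nat.primesBelow n, eulerDrop (1 + 1 / L) t p := by
    rw [← Finset.prod_pow, ← Finset.prod_pow, ← Finset.prod_mul_distrib]
    exact Finset.prod_congr rfl fun p hp => (eulerDrop_mul (hpr p hp) (by linarith) t).symm
  rw [hid, ← Finset.prod_sdiff hn (f := eulerDrop (1 + 1 / L) t), mul_comm]
  refine mul_le_mul_of_nonneg_right ?_ (sq_nonneg _)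
  exact mul_le_mul_of_nonneg_right hdrop
    (Finset.prod_nonneg fun p hp => zero_le_one.trans (one_le_eulerDrop (prime_of_mem hp) _ _))

/-- Weak form of Mertens' theorem, obtained by comparing `1/p` with `p^{-1-1/log K}`: for `p ≤ K` the two
differ by a factor at most `e`. -/
theorem sum_inv_small_le {S : Finset ℕ} (hS : ∀ p ∈ S, p.Prime) {K : ℝ} (hK : 1 < K)
    (hSK : ∀ p ∈ S, (p : ℝ) ≤ K) : ∑ p ∈ S, 1 / (p : ℝ) ≤ 3 * Real.log (2 + Real.log K) := by
  have hl : 0 < Real.log K := Real.log_pos hK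
  have h1 : 0 < 1 / Real.log K := by positivity
  have hz := (exp_sum_le_zeta hS (σ := 1 + 1 / Real.log K) (by linarith)).trans
    (norm_riemannZeta_real (by linarith)).2
  have e1 : 1 / (1 + 1 / Real.log K - 1) = Real.log K := by field_simp; ring
  rw [e1, ← Real.le_log_iff_exp_le (by linarith)] at hz
  calc ∑ p ∈ S, 1 / (p : ℝ) ≤ ∑ p ∈ S, 3 * (p : ℝ) ^ (-(1 + 1 / Real.log K)) := by
        refine Finset.sum_le_sum fun p hp => ?_
        have hp0 : (0 : ℝ) < p := by exact_mod_cast (hS p hp).pos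
        have e : 1 / (p : ℝ) = (p : ℝ) ^ (1 / Real.log K) * (p : ℝ) ^ (-(1 + 1 / Real.log K)) := by
          rw [← Real.rpow_add hp0, show 1 / Real.log K + -(1 + 1 / Real.log K) = -1 by ring,
            Real.rpow_neg_one, one_div]
        rw [e]
        refine mul_le_mul_of_nonneg_right ?_ (prime_rpow_pos (hS p hp) _).le
        rw [Real.rpow_def_of_pos hp0]
        have : Real.log p * (1 / Real.log K) ≤ 1 := by
          rw [mul_one_div, div_le_one hl]
          exact Real.log_le_log hp0 (hSK p hp)
        linarith [Real.exp_le_exp.2 this, Real.exp_one_lt_d9]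
    _ ≤ _ := by rw [← Finset.mul_sum]; linarith

/-- Drop over a sparse set of primes: at most `K` of them exceed `K`, and those contribute `O(1)` to the
exponent. -/
theorem prod_drop_le {S : Finset ℕ} (hS : ∀ p ∈ S, p.Prime) {K σ t m : ℝ} (hK : 1 < K)
    (hσ : 1 ≤ σ) (hcard : (S.card : ℝ) ≤ K)
    (hm : ∀ p ∈ S, (p : ℝ) ≤ K → 1 - Real.cos (t * Real.log p) ≤ m) (hm0 : 0 ≤ m) :
    ∏ p ∈ S, eulerDrop σ t p ≤ Real.exp (24 * m * Real.log (2 + Real.log K) + 16) := by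
  have h1 : ∏ p ∈ S, eulerDrop σ t p ≤
      ∏ p ∈ S, Real.exp (8 * (1 / (p : ℝ) * (1 - Real.cos (t * Real.log p)))) := by
    refine Finset.prod_le_prod (fun p hp => zero_le_one.trans (one_le_eulerDrop (hS p hp) _ _))
      fun p hp => (eulerDrop_le_exp (hS p hp) hσ t).trans (Real.exp_le_exp.2 ?_)
    have := prime_rpow_le_inv (hS p hp) hσ
    have : 0 ≤ 1 - Real.cos (t * Real.log p) := by linarith [Real.cos_le_one (t * Real.log p)]
    gcongr
  refine h1.trans ?_
  rw [← Real.exp_sum, ← Finset.mul_sum]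
  refine Real.exp_le_exp.2 ?_
  rw [← Finset.sum_filter_add_sum_filter_not S (fun p => (p : ℝ) ≤ K)]
  have hA : ∑ p ∈ S.filter (fun p : ℕ => (p : ℝ) ≤ K), 1 / (p : ℝ) * (1 - Real.cos (t * Real.log p)) ≤
      3 * Real.log (2 + Real.log K) * m := by
    calc _ ≤ ∑ p ∈ S.filter (fun p : ℕ => (p : ℝ) ≤ K), 1 / (p : ℝ) * m := by
          refine Finset.sum_le_sum fun p hp => ?_
          have hp := Finset.mem_filter.1 hp
          exact mul_le_mul_of_nonneg_left (hm p hp.1 hp.2) (by positivity)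
      _ ≤ _ := by
          rw [← Finset.sum_mul]
          refine mul_le_mul_of_nonneg_right (sum_inv_small_le ?_ hK ?_) hm0
          · exact fun p hp => hS p (Finset.mem_filter.1 hp).1
          · exact fun p hp => (Finset.mem_filter.1 hp).2
  have hB : ∑ p ∈ S.filter (fun p : ℕ => ¬ (p : ℝ) ≤ K), 1 / (p : ℝ) * (1 - Real.cos (t * Real.log p)) ≤ 2 := by
    have hK0 : 0 < K := by linarith
    calc _ ≤ ∑ p ∈ S.filter (fun p : ℕ => ¬ (p : ℝ) ≤ K), 1 / K * 2 := by
          refine Finset.sum_le_sum fun p hp => ?_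
          have hp := (Finset.mem_filter.1 hp).2
          push Not at hp
          have h2 : 1 - Real.cos (t * Real.log p) ≤ 2 := by
            linarith [Real.neg_one_le_cos (t * Real.log p)]
          have h3 : 0 ≤ 1 - Real.cos (t * Real.log p) := by
            linarith [Real.cos_le_one (t * Real.log p)]
          gcongr
      _ = ((S.filter fun p : ℕ => ¬ (p : ℝ) ≤ K).card : ℝ) * (1 / K * 2) := by simp
      _ ≤ K * (1 / K * 2) := by
          refine mul_le_mul_of_nonneg_right (le_trans ?_ hcard) (by positivity)
          exact_mod_cast Finset.card_filter_le _ _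
      _ = 2 := by field_simp
  linarith

theorem card_le_of_dvd {S : Finset ℕ} (hS : ∀ p ∈ S, p.Prime) {q : ℕ} (hq : 1 ≤ q)
    (hdvd : ∀ p ∈ S, p ∣ q) : (S.card : ℝ) ≤ 2 * Real.log q := by
  have h1 : 2 ^ S.card ≤ q := by
    calc 2 ^ S.card ≤ ∏ p ∈ S, p := Finset.pow_card_le_prod _ _ _ fun p hp => (hS p hp).two_le
      _ ≤ q := Nat.le_of_dvd hq (Finset.prod_primes_dvd _ (fun p hp => (hS p hp).prime) hdvd)
  have h2 : (2 : ℝ) ^ S.card ≤ q := by exact_mod_cast h1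
  have h3 := Real.log_le_log (by positivity) h2
  rw [Real.log_pow] at h3
  nlinarith [Real.log_two_gt_d9, (Nat.cast_nonneg S.card : (0 : ℝ) ≤ S.card)]

/-! ### The mean square -/

theorem LSmooth_one {q : ℕ} (y : ℝ) (s : ℂ) :
    LSmooth (1 : DirichletCharacter ℂ q) y s =
      ∏ p ∈ (primesUpTo y).filter (fun p => ¬ p ∣ q), (1 - (p : ℂ) ^ (-s))⁻¹ := by
  unfold LSmooth
  rw [Finset.prod_filter]
  refine Finset.prod_congr rfl fun p hp => ?_
  have hcop : IsUnit (p : ZMod q) ↔ ¬ p ∣ q := by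
    rw [ZMod.isUnit_iff_coprime, (prime_of_mem hp).coprime_iff_not_dvd]
  split_ifs with h
  · rw [MulChar.map_nonunit _ (fun hu => hcop.1 hu h)]
    simp
  · rw [MulChar.one_apply (hcop.2 h), one_mul]

/-- The mean-square integrand is the constant `‖L(β, χ₀; y)‖²` divided by the product of the drops. -/
theorem LSmooth_mul_drop {q : ℕ} (y : ℝ) {β : ℝ} (hβ : 0 < β) (t : ℝ) :
    ‖LSmooth (1 : DirichletCharacter ℂ q) y ((β : ℂ) + (t : ℂ) * I)‖ ^ 2 *
      ∏ p ∈ (primesUpTo y).filter (fun p => ¬ p ∣ q), eulerDrop β t p =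
    ‖LSmooth (1 : DirichletCharacter ℂ q) y (β : ℂ)‖ ^ 2 := by
  have key (t : ℝ) : ‖LSmooth (1 : DirichletCharacter ℂ q) y ((β : ℂ) + (t : ℂ) * I)‖ ^ 2 *
      ∏ p ∈ (primesUpTo y).filter (fun p => ¬ p ∣ q), eulerDrop β t p =
      ∏ p ∈ (primesUpTo y).filter (fun p => ¬ p ∣ q), ((1 - (p : ℝ) ^ (-β))⁻¹) ^ 2 := by
    rw [LSmooth_one, norm_prod, ← Finset.prod_pow, ← Finset.prod_mul_distrib]
    exact Finset.prod_congr rfl fun p hp =>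
      eulerDrop_mul (prime_of_mem (Finset.mem_filter.1 hp).1) hβ t
  have h0 := key 0
  simp only [eulerDrop, zero_mul, Real.cos_zero, sub_self, mul_zero, zero_div, add_zero,
    Finset.prod_const_one, mul_one, Complex.ofReal_zero] at h0
  rw [key t, h0]

set_option maxHeartbeats 800000 in
/-- Lower bound for the product of the drops over `p ≤ y`, `p ∤ q`, with `u = (log y)^{1/8}`. The first
alternative is reached for `|t| ≤ 1/u`, the second for `1/u ≤ |t| ≤ u²`. -/
theorem drop_dichotomy {y : ℝ} {q : ℕ} {β u t : ℝ} (hy : 0 < y) (hu : 1 ≤ u) (huL : Real.log y = u ^ 8)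
    (hq : 1 ≤ q) (hqL : Real.log q ≤ Real.log y ^ 2) (hβ0 : 0 < β) (hβ1 : β ≤ 1)
    (hbig : (2 + Real.log (2 * (u ^ 8) ^ 2)) ^ 48 ≤ u ^ 2) (ht : |t| ≤ u ^ 2) :
    1 + (t * u ^ 8) ^ 2 ≤ (∏ p ∈ (primesUpTo y).filter (fun p => ¬ p ∣ q), eulerDrop β t p) *
        (1 + 36 * Real.exp 124) ∨
      u ^ 10 ≤ (∏ p ∈ (primesUpTo y).filter (fun p => ¬ p ∣ q), eulerDrop β t p) *
        (1 + 36 * Real.exp 124) := by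
  have hu0 : 0 < u := by linarith
  have hL1 : 1 ≤ Real.log y := by rw [huL]; exact one_le_pow₀ hu
  have hσ : 1 ≤ 1 + 1 / Real.log y := by
    have : 0 < 1 / Real.log y := by positivity
    linarith
  have hσ2 : 1 + 1 / Real.log y ≤ 2 := by
    have : 1 / Real.log y ≤ 1 := (div_le_one (by linarith)).2 hL1
    linarith
  have hσ1 : 1 < 1 + 1 / Real.log y := by
    have : 0 < 1 / Real.log y := by positivity
    linarith
  set σ := 1 + 1 / Real.log y with hσdef
  set K : ℝ := 2 * (u ^ 8) ^ 2 with hKdef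
  have hK : 1 < K := by
    have : 1 ≤ (u ^ 8) ^ 2 := one_le_pow₀ (one_le_pow₀ hu)
    linarith
  have hlK : 0 < Real.log K := Real.log_pos hK
  set S := (primesUpTo y).filter (fun p => ¬ p ∣ q) with hSdef
  set T := (primesUpTo y).filter (fun p => p ∣ q) with hTdef
  have hSp : ∀ p ∈ S, p.Prime := fun p hp => prime_of_mem (Finset.mem_filter.1 hp).1
  have hTp : ∀ p ∈ T, p.Prime := fun p hp => prime_of_mem (Finset.mem_filter.1 hp).1
  -- `q` has at most `2 log q ≤ 2 (log y)² = K` prime factors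
  have hcard : (T.card : ℝ) ≤ K := by
    have := card_le_of_dvd hTp hq fun p hp => (Finset.mem_filter.1 hp).2
    rw [huL] at hqL
    linarith
  have hβσ : ∏ p ∈ S, eulerDrop σ t p ≤ ∏ p ∈ S, eulerDrop β t p :=
    Finset.prod_le_prod (fun p hp => zero_le_one.trans (one_le_eulerDrop (hSp p hp) _ _))
      fun p hp => eulerDrop_anti (hSp p hp) hβ0 (by linarith) t
  set A := ∏ p ∈ S, eulerDrop σ t p with hA
  set B := ∏ p ∈ T, eulerDrop σ t p with hB
  have hA1 : 1 ≤ A := Finset.one_le_prod fun p hp => one_le_eulerDrop (hSp p hp) _ _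
  have hfull := full_product_lower hy hL1 t
  have hsplit : ∏ p ∈ primesUpTo y, eulerDrop σ t p = B * A :=
    (Finset.prod_filter_mul_prod_filter_not _ _ _).symm
  rw [← hσdef, hsplit, huL] at hfull
  have hζ := norm_riemannZeta_le (t := t) hσ1 hσ2
  set Z := ‖riemannZeta ((σ : ℂ) + t * I)‖ with hZ
  have hZ0 : 0 ≤ Z := norm_nonneg _
  set w := Real.log (2 + Real.log K) with hw
  have hw0 : 0 ≤ w := Real.log_nonneg (by linarith)
  have hw1 : w ≤ 2 + Real.log K := (Real.log_le_sub_one_of_pos (by linarith)).trans (by linarith)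
  have hmono := mul_le_mul_of_nonneg_right hβσ
    (show 0 ≤ 1 + 36 * Real.exp 124 by positivity)
  have hA0 : 0 < A := by linarith
  rcases le_total (|t| * u) 1 with hcase | hcase
  -- small `t`: the primes dividing `q` cost only a bounded factor
  · have hmK : ∀ p ∈ T, (p : ℝ) ≤ K → 1 - Real.cos (t * Real.log p) ≤ (t * Real.log K) ^ 2 / 2 := by
      intro p hp hpK
      have h1 := Real.one_sub_sq_div_two_le_cos (x := t * Real.log p)
      have hp1 : (1 : ℝ) < p := by exact_mod_cast (hTp p hp).one_lt
      have h2 : Real.log p ≤ Real.log K := Real.log_le_log (by linarith) hpK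
      have h3 : (t * Real.log p) ^ 2 ≤ (t * Real.log K) ^ 2 := by
        rw [mul_pow, mul_pow]
        have := Real.log_pos hp1
        gcongr
      linarith
    have hBle := prod_drop_le (σ := σ) (t := t) hTp hK hσ hcard hmK (by positivity)
    have hm : 24 * ((t * Real.log K) ^ 2 / 2) * w + 16 ≤ 28 := by
      have h1 : (t * Real.log K) ^ 2 * w ≤ t ^ 2 * u ^ 2 := by
        calc (t * Real.log K) ^ 2 * w ≤ t ^ 2 * ((2 + Real.log K) ^ 2 * (2 + Real.log K)) := by
              rw [mul_pow, mul_assoc]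
              gcongr
              linarith
          _ = t ^ 2 * (2 + Real.log K) ^ 3 := by ring
          _ ≤ t ^ 2 * (2 + Real.log K) ^ 48 := by
              gcongr
              · linarith
              · norm_num
          _ ≤ _ := by gcongr
      have h2 : t ^ 2 * u ^ 2 ≤ 1 := by
        rw [← sq_abs t, ← mul_pow]
        exact pow_le_one₀ (by positivity) hcase
      linarith
    have hB2 : B ≤ Real.exp 28 := hBle.trans (Real.exp_le_exp.2 hm)
    have ht1 : |t| ≤ 1 := by nlinarith [abs_nonneg t]
    have hZt : Z * |t| ≤ 6 := by
      have : t ^ 2 ≤ 1 := by rw [← sq_abs]; exact pow_le_one₀ (abs_nonneg t) ht1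
      linarith
    have hZt2 : (Z * |t|) ^ 2 ≤ 36 := by
      have := pow_le_pow_left₀ (by positivity) hZt 2
      linarith
    have h1 : (t * u ^ 8) ^ 2 ≤ 36 * Real.exp 124 * A := by
      calc (t * u ^ 8) ^ 2 = t ^ 2 * (u ^ 8) ^ 2 := by ring
        _ ≤ t ^ 2 * (Real.exp 96 * (B * A) * Z ^ 2) := by gcongr
        _ = Real.exp 96 * B * A * (Z * |t|) ^ 2 := by rw [mul_pow, sq_abs]; ring
        _ ≤ Real.exp 96 * Real.exp 28 * A * 36 := by gcongr
        _ = _ := by rw [← Real.exp_add]; norm_num; ring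
    have h2 : 1 + (t * u ^ 8) ^ 2 ≤ A * (1 + 36 * Real.exp 124) := by linarith
    exact Or.inl (h2.trans hmono)
  -- larger `t`: the primes dividing `q` cost a power of `log log y`, at most `u²`
  · have hBle := prod_drop_le (σ := σ) (t := t) (m := 2) hTp hK hσ hcard
      (fun p _ _ => by linarith [Real.neg_one_le_cos (t * Real.log p)]) (by norm_num)
    have hB2 : B ≤ Real.exp 16 * u ^ 2 := by
      refine hBle.trans ?_
      have e : Real.exp (24 * 2 * w + 16) = Real.exp 16 * (2 + Real.log K) ^ 48 := by
        rw [show 24 * 2 * w + 16 = 16 + (48 : ℕ) * w by push_cast; ring, Real.exp_add,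
          Real.exp_nat_mul, hw, Real.exp_log (by linarith)]
      rw [e]
      gcongr
    have ht0 : 0 < |t| := by
      by_contra h
      have : |t| = 0 := le_antisymm (not_lt.1 h) (abs_nonneg t)
      rw [this] at hcase; linarith
    have huu : u ≤ u ^ 2 := by nlinarith
    have hZle : Z ≤ 6 * u ^ 2 := by
      refine le_of_mul_le_mul_right (hζ.trans ?_) ht0
      rw [← sq_abs t]
      have h1 : 1 ≤ |t| * u ^ 2 := hcase.trans (by gcongr)
      have h2 : |t| ≤ |t| * u ^ 2 := le_mul_of_one_le_right ht0.le (one_le_pow₀ hu)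
      have h3 : |t| ^ 2 ≤ |t| * u ^ 2 := by rw [sq]; gcongr
      linarith
    have h1 : u ^ 10 * u ^ 6 ≤ 36 * Real.exp 124 * A * u ^ 6 := by
      calc u ^ 10 * u ^ 6 = (u ^ 8) ^ 2 := by ring
        _ ≤ Real.exp 96 * (B * A) * Z ^ 2 := hfull
        _ ≤ Real.exp 96 * ((Real.exp 16 * u ^ 2) * A) * (6 * u ^ 2) ^ 2 := by gcongr
        _ = 36 * Real.exp 112 * A * u ^ 6 := by
            rw [show (112 : ℝ) = 96 + 16 by norm_num, Real.exp_add]; ring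
        _ ≤ _ := by
            gcongr
            norm_num
    have h2 : u ^ 10 ≤ A * (1 + 36 * Real.exp 124) := by
      have := le_of_mul_le_mul_right h1 (by positivity)
      linarith
    exact Or.inr (h2.trans hmono)

theorem one_le_of_dichotomy {a b A C : ℝ} (ha : 0 < a) (hb : 0 < b) (hAC : 0 ≤ A * C)
    (h : a ≤ A * C ∨ b ≤ A * C) : 1 ≤ A * (C * (a⁻¹ + 1 / b)) := by
  have ha' : 0 < a⁻¹ := inv_pos.2 ha
  have hb' : 0 < b⁻¹ := inv_pos.2 hb
  rw [← mul_assoc, one_div, mul_add]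
  rcases h with h | h
  · have h1 := mul_le_mul_of_nonneg_right h ha'.le
    rw [mul_inv_cancel₀ ha.ne'] at h1
    linarith [mul_nonneg hAC hb'.le]
  · have h1 := mul_le_mul_of_nonneg_right h hb'.le
    rw [mul_inv_cancel₀ hb.ne'] at h1
    linarith [mul_nonneg hAC ha'.le]

/-- The growth condition on `u` needed in `drop_dichotomy`: powers of `log u` are negligible against `u²`. -/
theorem eventually_big : ∀ᶠ u : ℝ in Filter.atTop, (2 + Real.log (2 * (u ^ 8) ^ 2)) ^ 48 ≤ u ^ 2 := by
  have h1 : (fun u : ℝ => 3 + 16 * Real.log u) =o[Filter.atTop] fun u : ℝ => u ^ ((1 : ℝ) / 24) :=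
    (Asymptotics.isLittleO_const_left.2 (Or.inr
      (Filter.tendsto_abs_atTop_atTop.comp (tendsto_rpow_atTop (by norm_num))))).add
      ((isLittleO_log_rpow_atTop (by norm_num)).const_mul_left 16)
  filter_upwards [h1.bound one_pos, Filter.eventually_ge_atTop 1] with u hu hu1
  have hu0 : 0 < u := by linarith
  have hl := Real.log_nonneg hu1
  rw [one_mul, Real.norm_of_nonneg (by linarith), Real.norm_of_nonneg (by positivity)] at hu
  have e : Real.log (2 * (u ^ 8) ^ 2) = Real.log 2 + 16 * Real.log u := by
    rw [Real.log_mul (by norm_num) (by positivity), ← pow_mul, Real.log_pow]; norm_num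
  calc _ ≤ (3 + 16 * Real.log u) ^ 48 := by
        rw [e]
        have := Real.log_two_lt_d9
        have := Real.log_two_gt_d9
        exact pow_le_pow_left₀ (by linarith) (by linarith) _
    _ ≤ (u ^ ((1 : ℝ) / 24)) ^ 48 := pow_le_pow_left₀ (by linarith) hu _
    _ = u ^ 2 := by
        rw [← Real.rpow_natCast, ← Real.rpow_mul hu0.le, ← Real.rpow_natCast]; norm_num

/-- Mean square bound for the truncated `L`-series of the principal character:
`∫_{-log^{1/4} y}^{log^{1/4} y} |L(β+it,χ₀;y)|² dt = O(L(β,χ₀;y)²/log y)`. -/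
theorem LSmooth_principal_mean_square :
    ∃ y₀ C : ℝ, ∀ (y : ℝ) (q : ℕ) (β : ℝ),
      y₀ ≤ y → 1 ≤ q → Real.log q ≤ (Real.log y) ^ 2 →
      3 / 4 ≤ β → β ≤ 1 →
      (∫ t in (-(Real.log y ^ ((1 : ℝ) / 4)))..(Real.log y ^ ((1 : ℝ) / 4)),
          ‖LSmooth (1 : DirichletCharacter ℂ q) y ((β : ℂ) + (t : ℂ) * Complex.I)‖ ^ 2) ≤
        C * ‖LSmooth (1 : DirichletCharacter ℂ q) y ((β : ℂ))‖ ^ 2 / Real.log y := by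
  obtain ⟨u₀, hu₀⟩ := Filter.eventually_atTop.1 eventually_big
  refine ⟨Real.exp ((max u₀ 1) ^ 8), (1 + 36 * Real.exp 124) * (Real.pi + 2), ?_⟩
  intro y q β hy hq hqL hβ hβ1
  have hy0 : 0 < y := (Real.exp_pos _).trans_le hy
  have hL : (max u₀ 1) ^ 8 ≤ Real.log y := (Real.le_log_iff_exp_le hy0).2 hy
  have hm1 : 1 ≤ max u₀ 1 := le_max_right _ _
  have hL1 : 1 ≤ Real.log y := (one_le_pow₀ hm1).trans hL
  have hL0 : 0 < Real.log y := by linarith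
  obtain ⟨u, hudef⟩ : ∃ u : ℝ, u = Real.log y ^ ((1 : ℝ) / 8) := ⟨_, rfl⟩
  have hu0 : 0 < u := hudef ▸ Real.rpow_pos_of_pos hL0 _
  have huL : Real.log y = u ^ 8 := by
    rw [hudef, ← Real.rpow_natCast, ← Real.rpow_mul hL0.le]; norm_num
  have hL4 : Real.log y ^ ((1 : ℝ) / 4) = u ^ 2 := by
    rw [hudef, ← Real.rpow_natCast, ← Real.rpow_mul hL0.le]; norm_num
  have hum : max u₀ 1 ≤ u := by
    rw [huL] at hL
    exact le_of_pow_le_pow_left₀ (by norm_num) hu0.le hL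
  have hu1 : 1 ≤ u := hm1.trans hum
  have hbig := hu₀ u ((le_max_left _ _).trans hum)
  rw [hL4]
  set D := ‖LSmooth (1 : DirichletCharacter ℂ q) y (β : ℂ)‖ ^ 2 with hD
  have hD0 : 0 ≤ D := sq_nonneg _
  set C := 1 + 36 * Real.exp 124 with hC
  have hC0 : 0 ≤ C := by positivity
  have hβ0 : 0 < β := by linarith
  have hSp : ∀ p ∈ (primesUpTo y).filter (fun p => ¬ p ∣ q), p.Prime :=
    fun p hp => prime_of_mem (Finset.mem_filter.1 hp).1
  have hH1 (t : ℝ) : 1 ≤ ∏ p ∈ (primesUpTo y).filter (fun p => ¬ p ∣ q), eulerDrop β t p :=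
    Finset.one_le_prod fun p hp => one_le_eulerDrop (hSp p hp) _ _
  -- this form also gives continuity in `t`
  have hform (t : ℝ) : ‖LSmooth (1 : DirichletCharacter ℂ q) y ((β : ℂ) + (t : ℂ) * I)‖ ^ 2 =
      D / ∏ p ∈ (primesUpTo y).filter (fun p => ¬ p ∣ q), eulerDrop β t p := by
    rw [eq_div_iff (by linarith [hH1 t]), LSmooth_mul_drop y hβ0 t]
  have hcont : Continuous fun t : ℝ =>
      ‖LSmooth (1 : DirichletCharacter ℂ q) y ((β : ℂ) + (t : ℂ) * I)‖ ^ 2 := by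
    simp only [hform]
    refine continuous_const.div ?_ fun t => by linarith [hH1 t]
    unfold eulerDrop
    fun_prop
  have hcont1 : Continuous fun t : ℝ => (1 + (t * u ^ 8) ^ 2)⁻¹ :=
    Continuous.inv₀ (by fun_prop) fun t => by positivity
  have hle : -(u ^ 2) ≤ u ^ 2 := by linarith [sq_nonneg u]
  calc (∫ t in (-(u ^ 2))..(u ^ 2),
        ‖LSmooth (1 : DirichletCharacter ℂ q) y ((β : ℂ) + (t : ℂ) * I)‖ ^ 2)
      ≤ ∫ t in (-(u ^ 2))..(u ^ 2), D * C * ((1 + (t * u ^ 8) ^ 2)⁻¹ + 1 / u ^ 10) := by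
        refine intervalIntegral.integral_mono_on hle (hcont.intervalIntegrable _ _)
          (Continuous.intervalIntegrable (by fun_prop) _ _) fun t ht => ?_
        have hlow := one_le_of_dichotomy (by positivity) (by positivity)
          (mul_nonneg (by linarith [hH1 t]) hC0)
          (drop_dichotomy hy0 hu1 huL hq hqL hβ0 hβ1 hbig (abs_le.2 ht))
        rw [hform, div_le_iff₀ (by linarith [hH1 t])]
        have := mul_le_mul_of_nonneg_left hlow hD0
        linarith
    _ = D * C * ((∫ t in (-(u ^ 2))..(u ^ 2), (1 + (t * u ^ 8) ^ 2)⁻¹) + 2 * u ^ 2 * (1 / u ^ 10)) := by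
        rw [intervalIntegral.integral_const_mul, intervalIntegral.integral_add
          (hcont1.intervalIntegrable _ _) (continuous_const.intervalIntegrable _ _),
          intervalIntegral.integral_const, smul_eq_mul]
        ring
    _ ≤ D * C * (Real.pi / u ^ 8 + 2 * u ^ 2 * (1 / u ^ 10)) := by
        have : (∫ t in (-(u ^ 2))..(u ^ 2), (1 + (t * u ^ 8) ^ 2)⁻¹) ≤ Real.pi / u ^ 8 := by
          rw [intervalIntegral.integral_comp_mul_right (fun x => (1 + x ^ 2)⁻¹) (by positivity),
            integral_inv_one_add_sq, smul_eq_mul, inv_mul_eq_div]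
          have h1 := Real.arctan_lt_pi_div_two (u ^ 2 * u ^ 8)
          have h2 := Real.neg_pi_div_two_lt_arctan (-(u ^ 2) * u ^ 8)
          gcongr
          linarith
        gcongr
    _ = C * (Real.pi + 2) * D / Real.log y := by
        rw [huL]; field_simp
end
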